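/- Let μ be a probability measure whose density ρ lies in 𝒟_L for some L > 0, and let 0 ≤ s ≤ t ≤ 1. (i) If A ∈ C^∞(ℝ), then ∫ A(ζₙ(x,s))·(ζₙ(x,t) − ζₙ(x,s)) dμ(x) − (∫ A(ζₙ(x,s)) dμ(x))·(∫ (ζₙ(x,t) − ζₙ(x,s)) dμ(x)) → 0 as n → ∞. (ii) If A ∈ C_c^∞(ℝ) and q ∈ {1,2}, then ∫ A(ξₙ(x,s))·(ξₙ(x,t) − ξₙ(x,s))^q dμ(x) − (∫ A(ξₙ(x,s)) dμ(x))·(∫ (ξₙ(x,t) − ξₙ(x,s))^q dμ(x)) → 0 as n → ∞. -/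

import Mathlib

open MeasureTheory Filter Topology Set UniformConvergence

noncomputable section

instance : Fact ((0:ℝ) < 1) := ⟨zero_lt_one⟩

/-- The circle `𝕊 = ℝ/ℤ`. -/
abbrev Circle1 : Type := AddCircle (1 : ℝ)

/-- A `C²` expanding circle map with expansion `≥ lam` and `‖T''‖_∞ ≤ Astar`,
encoded by a lift `F : ℝ → ℝ` satisfying `F (x+1) = F x + deg`. -/
structure CM (lam Astar : ℝ) where
  F : ℝ → ℝ
  deg : ℤ
  lift_add_one : ∀ x : ℝ, F (x + 1) = F x + deg
  contDiff : ContDiff ℝ 2 F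
  expanding : ∀ x : ℝ, lam ≤ deriv F x
  second_bound : ∀ x : ℝ, |deriv (deriv F) x| ≤ Astar

namespace CM

variable {lam Astar : ℝ}

/-- The induced map on the circle. -/
def toMap (T : CM lam Astar) : Circle1 → Circle1 :=
  fun x => (↑(T.F ((AddCircle.equivIco 1 0 x : ℝ))) : Circle1)

/-- The derivative of `T`, as a function on the circle. -/
def dmap (T : CM lam Astar) : Circle1 → ℝ :=
  fun x => deriv T.F ((AddCircle.equivIco 1 0 x : ℝ))

end CM

/-- The `C¹` distance on the space of maps. -/
def dC1 {lam Astar : ℝ} (T₁ T₂ : CM lam Astar) : ℝ :=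
  (⨆ x : Circle1, dist (T₁.toMap x) (T₂.toMap x)) + (⨆ x : Circle1, |T₁.dmap x - T₂.dmap x|)

/-- The transfer operator `ℒ_T h (x) = ∑_{T y = x} h y / T' y`. -/
def transfer {lam Astar : ℝ} (T : CM lam Astar) (h : Circle1 → ℝ) : Circle1 → ℝ :=
  fun x => ∑' y : {y : Circle1 // T.toMap y = x}, h y / T.dmap y

/-- Iterated transfer operators `ℒ_k ⋯ ℒ_1` of the sequence `T_1, T_2, …` (`Ts i = T_i`). -/
def transferIter {lam Astar : ℝ} (Ts : ℕ → CM lam Astar) : ℕ → (Circle1 → ℝ) → (Circle1 → ℝ)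
  | 0, h => h
  | (k+1), h => transfer (Ts (k+1)) (transferIter Ts k h)

/-- Composition `T_k ∘ ⋯ ∘ T_1` as circle maps. -/
def mapIter {lam Astar : ℝ} (Ts : ℕ → CM lam Astar) : ℕ → Circle1 → Circle1
  | 0 => id
  | (k+1) => (Ts (k+1)).toMap ∘ mapIter Ts k

/-- Composition of the lifts `F_k ∘ ⋯ ∘ F_1`. -/
def liftIter {lam Astar : ℝ} (Ts : ℕ → CM lam Astar) : ℕ → ℝ → ℝ
  | 0 => id
  | (k+1) => (Ts (k+1)).F ∘ liftIter Ts k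

/-- A real representative of `z`. -/
def zrep (z : Circle1) : ℝ := (AddCircle.equivIco 1 0 z : ℝ)

/-- The coordinate on the cut circle `J_z = 𝕊 ∖ {z}`. -/
def arcCoord (z x : Circle1) : ℝ := ((AddCircle.equivIoc 1 (zrep z) x : ℝ))

/-- `|x − y|_z`: the length of the subarc of `J_z` connecting `x` and `y`. -/
def arcDist (z x y : Circle1) : ℝ := |arcCoord z x - arcCoord z y|

/-- `g` is Lipschitz on `J_z = 𝕊 ∖ {z}` with constant `L`. -/
def LipOnArc (z : Circle1) (L : ℝ) (g : Circle1 → ℝ) : Prop :=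
  ∀ x y : Circle1, x ≠ z → y ≠ z → |g x - g y| ≤ L * arcDist z x y

/-- A probability density w.r.t. the Haar–Lebesgue measure `𝔪` on the circle. -/
def IsProbDensity (ψ : Circle1 → ℝ) : Prop :=
  Integrable ψ volume ∧ (∫ x : Circle1, ψ x) = 1 ∧ ∀ x, 0 ≤ ψ x

/-- The class `𝒟_L`: positive probability densities whose logarithm is Lipschitz
with constant `L` on `J_z` for some `z`. -/
def memD (L : ℝ) (ψ : Circle1 → ℝ) : Prop :=
  IsProbDensity ψ ∧ (∀ x, 0 < ψ x) ∧ ∃ z : Circle1, LipOnArc z L (fun x => Real.log (ψ x))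

/-- The `L¹(𝔪)` norm. -/
def l1norm (h : Circle1 → ℝ) : ℝ := ∫ x : Circle1, |h x|

/-- The supremum norm. -/
def supNorm (h : Circle1 → ℝ) : ℝ := ⨆ x : Circle1, |h x|

/-- The Lipschitz constant of `h` (w.r.t. the metric of the circle). -/
def lipConst (h : Circle1 → ℝ) : ℝ :=
  sInf {L : ℝ | 0 ≤ L ∧ ∀ x y : Circle1, |h x - h y| ≤ L * dist x y}

/-- The Lipschitz norm `‖h‖_Lip = Lip(h) + ‖h‖_∞`. -/
def lipNorm (h : Circle1 → ℝ) : ℝ := lipConst h + supNorm h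

/-- `ρ` is the density of the SRB measure of `T`: the density of a `T`-invariant
probability measure equivalent to `𝔪`. -/
def IsSRBDensity {lam Astar : ℝ} (T : CM lam Astar) (ρ : Circle1 → ℝ) : Prop :=
  IsProbDensity ρ ∧ (∀ᵐ x : Circle1, 0 < ρ x) ∧
    Measure.map T.toMap (volume.withDensity (fun x => ENNReal.ofReal (ρ x))) =
      volume.withDensity (fun x => ENNReal.ofReal (ρ x))

section QDS

variable {lam Astar : ℝ}

/-- `x_{n,k} = T_{n,k} ∘ ⋯ ∘ T_{n,1}` for a triangular array. -/
def arrIter (Tarr : ℕ → ℕ → CM lam Astar) (n : ℕ) : ℕ → Circle1 → Circle1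
  | 0 => id
  | (k+1) => (Tarr n (k+1)).toMap ∘ arrIter Tarr n k

/-- `ℒ_{n,k} ⋯ ℒ_{n,1}` for a triangular array. -/
def arrTransfer (Tarr : ℕ → ℕ → CM lam Astar) (n : ℕ) : ℕ → (Circle1 → ℝ) → (Circle1 → ℝ)
  | 0, h => h
  | (k+1), h => transfer (Tarr n (k+1)) (arrTransfer Tarr n k h)

/-- `f_{n,k} = f ∘ T_{n,k} ∘ ⋯ ∘ T_{n,1}` evaluated at `x`. -/
def fnk (Tarr : ℕ → ℕ → CM lam Astar) (f : Circle1 → ℝ) (n k : ℕ) (x : Circle1) : ℝ :=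
  f (arrIter Tarr n k x)

/-- `ζₙ(x,t) = n⁻¹ (∑_{k<⌊nt⌋} f_{n,k}(x) + {nt}·f_{n,⌊nt⌋}(x))`. -/
def zetaP (Tarr : ℕ → ℕ → CM lam Astar) (f : Circle1 → ℝ) (n : ℕ) (x : Circle1) (t : ℝ) : ℝ :=
  (n : ℝ)⁻¹ * ((∑ k ∈ Finset.range ⌊(n : ℝ) * t⌋₊, fnk Tarr f n k x) +
    Int.fract ((n : ℝ) * t) * fnk Tarr f n ⌊(n : ℝ) * t⌋₊ x)

/-- `ξₙ(x,t) = √n ζₙ(x,t) − √n μ(ζₙ(·,t))` for a measure `μ`. -/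
def xiP (Tarr : ℕ → ℕ → CM lam Astar) (f : Circle1 → ℝ) (μ : Measure Circle1) (n : ℕ)
    (x : Circle1) (t : ℝ) : ℝ :=
  Real.sqrt n * zetaP Tarr f n x t - Real.sqrt n * ∫ y, zetaP Tarr f n y t ∂μ

/-- The Hölder continuity (exponent `η`) of the curve `γ` on `[0,1]`, w.r.t. `d_{C¹}`. -/
def HolderCurve (η : ℝ) (γ : ℝ → CM lam Astar) : Prop :=
  ∃ H : ℝ, ∀ s ∈ Icc (0:ℝ) 1, ∀ t ∈ Icc (0:ℝ) 1, dC1 (γ s) (γ t) ≤ H * |s - t| ^ η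

/-- The convergence-rate condition `sup_n n^η sup_t d_{C¹}(T_{n,⌊nt⌋}, γ_t) < ∞`. -/
def ArrayApprox (η : ℝ) (γ : ℝ → CM lam Astar) (Tarr : ℕ → ℕ → CM lam Astar) : Prop :=
  ∃ M : ℝ, ∀ n : ℕ, 1 ≤ n → ∀ t ∈ Icc (0:ℝ) 1,
    (n : ℝ) ^ η * dC1 (Tarr n ⌊(n : ℝ) * t⌋₊) (γ t) ≤ M

end QDS

/-- The path space: functions `[0,1] → ℝ` with the topology of uniform convergence;
continuous paths (with the supremum metric) embed isometrically. -/
abbrev PathSpace : Type := (Icc (0:ℝ) 1) →ᵤ ℝ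

instance : MeasurableSpace PathSpace := borel PathSpace

/-- A function `[0,1] → ℝ` (given as a function on `ℝ`) as a point of the path space. -/
def pathOf (g : ℝ → ℝ) : PathSpace := UniformFun.ofFun (fun t => g t)

/-- Evaluation of a path at time `t` (clamped to `[0,1]`). -/
def evalPath (t : ℝ) (ω : PathSpace) : ℝ := UniformFun.toFun ω (projIcc 0 1 zero_le_one t)


section Extra

variable {lam Astar : ℝ}

/-- `μ(ζₙ(·,t))` for the measure with density `ρ` w.r.t. `𝔪`. -/
def zetaMean (Tarr : ℕ → ℕ → CM lam Astar) (f : Circle1 → ℝ) (ρ : Circle1 → ℝ)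
    (n : ℕ) (t : ℝ) : ℝ :=
  ∫ y : Circle1, zetaP Tarr f n y t * ρ y

/-- `𝔪(ζₙ(·,t))`, the mean w.r.t. the Lebesgue measure. -/
def zetaMeanM (Tarr : ℕ → ℕ → CM lam Astar) (f : Circle1 → ℝ) (n : ℕ) (t : ℝ) : ℝ :=
  ∫ y : Circle1, zetaP Tarr f n y t

/-- `ξₙ(x,t) = √n ζₙ(x,t) − √n μ(ζₙ(·,t))`, where `μ` has density `ρ`. -/
def xiD (Tarr : ℕ → ℕ → CM lam Astar) (f : Circle1 → ℝ) (ρ : Circle1 → ℝ)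
    (n : ℕ) (x : Circle1) (t : ℝ) : ℝ :=
  Real.sqrt n * zetaP Tarr f n x t - Real.sqrt n * zetaMean Tarr f ρ n t

end Extra

/-- The σ-algebra `𝔉_t` on the path space, generated by the evaluations at times `s ∈ [0,t]`. -/
def pathFiltration (t : ℝ) : MeasurableSpace PathSpace :=
  ⨆ (s : ℝ) (_ : 0 ≤ s ∧ s ≤ t), MeasurableSpace.comap (evalPath s) (borel ℝ)

/-- The process `M_t(ω) = A(ω(t)) − A(ω(0)) − ½∫₀ᵗ σ̂ₛ²·A''(ω(s)) ds`. -/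
def MGproc (σ2 : ℝ → ℝ) (A : ℝ → ℝ) (t : ℝ) (ω : PathSpace) : ℝ :=
  A (evalPath t ω) - A (evalPath 0 ω) -
    (1/2) * ∫ s in (0:ℝ)..t, σ2 s * deriv (deriv A) (evalPath s ω)

/-- `P` solves the martingale problem on `C⁰([0,1],ℝ)` for the generator `½σ̂ₜ² d²/dx²`,
started at `0`:  `P` is a probability measure, concentrated on continuous paths starting at `0`,
and for every `A ∈ C_c^∞(ℝ)` the process `MGproc σ2 A` is a `P`-martingale w.r.t. the
natural filtration `𝔉_t`.  -/
def SolvesMartingaleProblem (σ2 : ℝ → ℝ) (P : Measure PathSpace) : Prop :=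
  IsProbabilityMeasure P ∧
  P {ω : PathSpace | evalPath 0 ω = 0} = 1 ∧
  P {ω : PathSpace | Continuous (UniformFun.toFun ω)} = 1 ∧
  ∀ A : ℝ → ℝ, ContDiff ℝ (⊤ : ℕ∞) A → HasCompactSupport A →
    (∀ t ∈ Icc (0:ℝ) 1, Integrable (MGproc σ2 A t) P) ∧
    (∀ t ∈ Icc (0:ℝ) 1, @Measurable PathSpace ℝ (pathFiltration t) _ (MGproc σ2 A t)) ∧
    (∀ s ∈ Icc (0:ℝ) 1, ∀ t ∈ Icc (0:ℝ) 1, s ≤ t →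
      P[MGproc σ2 A t | pathFiltration s] =ᵐ[P] MGproc σ2 A s)

end


/-! ### Helper lemmas -/

structure GLift (B : ℝ) (Φ Φd : ℝ → ℝ) (D : ℤ) : Prop where
  hd : ∀ x, HasDerivAt Φ (Φd x) x
  cont : Continuous Φd
  one : ∀ x, 1 ≤ Φd x
  per : ∀ x, Φ (x + 1) = Φ x + D
  dist : ∀ x y, Φd x ≤ Real.exp (B * |Φ x - Φ y|) * Φd y

structure Cone (K z : ℝ) (φ : ℝ → ℝ) : Prop where
  cont : ContinuousOn φ (Ioo z (z + 1))
  nonneg : ∀ x ∈ Ioo z (z + 1), 0 ≤ φ x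
  le : ∀ x ∈ Ioo z (z + 1), ∀ y ∈ Ioo z (z + 1), φ x ≤ Real.exp (K * |x - y|) * φ y

lemma expand_of_deriv {Φ : ℝ → ℝ} {κ : ℝ} (hd : Differentiable ℝ Φ)
    (h : ∀ x, κ ≤ deriv Φ x) (x y : ℝ) : κ * |x - y| ≤ |Φ x - Φ y| := by
  have key : ∀ x y : ℝ, x ≤ y → κ * (y - x) ≤ Φ y - Φ x := fun x y hxy =>
    mul_sub_le_image_sub_of_le_deriv hd h hxy
  rcases le_total x y with hxy | hxy
  · have := key x y hxy
    rw [abs_sub_comm x y, abs_sub_comm (Φ x), abs_of_nonneg (sub_nonneg.2 hxy)]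
    exact this.trans (le_abs_self _)
  · have := key y x hxy
    rw [abs_of_nonneg (sub_nonneg.2 hxy)]
    exact this.trans (le_abs_self _)

lemma Cone.bound {K z : ℝ} {φ : ℝ → ℝ} (hK : 0 ≤ K) (h : Cone K z φ) :
    ∃ C, ∀ x ∈ Ioo z (z + 1), |φ x| ≤ C := by
  refine ⟨Real.exp K * φ (z + 1/2), fun x hx => ?_⟩
  have hm : z + 1/2 ∈ Ioo z (z+1) := ⟨by linarith, by linarith⟩
  rw [abs_of_nonneg (h.nonneg x hx)]
  refine (h.le x hx _ hm).trans ?_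
  have : |x - (z + 1/2)| ≤ 1 := by rw [abs_le]; constructor <;> linarith [hx.1, hx.2]
  gcongr
  · exact h.nonneg _ hm
  · nlinarith

lemma bdd_integrable {z C : ℝ} {φ : ℝ → ℝ} (hc : AEStronglyMeasurable φ (volume.restrict (Ioo z (z+1))))
    (hb : ∀ x ∈ Ioo z (z + 1), |φ x| ≤ C) : IntegrableOn φ (Ioo z (z + 1)) := by
  refine Integrable.of_bound hc C ?_
  filter_upwards [ae_restrict_mem measurableSet_Ioo] with x hx using hb x hx

lemma Cone.int {K z : ℝ} {φ : ℝ → ℝ} (hK : 0 ≤ K) (h : Cone K z φ) :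
    IntegrableOn φ (Ioo z (z + 1)) := by
  obtain ⟨C, hC⟩ := h.bound hK
  exact bdd_integrable (h.cont.aestronglyMeasurable measurableSet_Ioo) hC

lemma Cone.int_mul {K z N : ℝ} {φ H : ℝ → ℝ} (hK : 0 ≤ K) (h : Cone K z φ) (hH : Measurable H)
    (hN : ∀ x, |H x| ≤ N) :
    IntegrableOn (fun x => φ x * H x) (Ioo z (z + 1)) := by
  obtain ⟨C, hC⟩ := h.bound hK
  refine bdd_integrable (C := C * N)
    ((h.cont.aestronglyMeasurable measurableSet_Ioo).mul hH.aestronglyMeasurable) ?_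
  intro x hx
  rw [abs_mul]
  exact mul_le_mul (hC x hx) (hN x) (abs_nonneg _) ((abs_nonneg _).trans (hC x hx))

/-- push-forward of a density under a good lift -/
lemma push {B K z : ℝ} {Φ Φd : ℝ → ℝ} {D : ℤ} (hΦ : GLift B Φ Φd D) (hK : 0 ≤ K + B)
    {φ : ℝ → ℝ} (hc : ContinuousOn φ (Ioo z (z + 1))) (hnn : ∀ x ∈ Ioo z (z + 1), 0 ≤ φ x)
    (hle : ∀ x ∈ Ioo z (z + 1), ∀ y ∈ Ioo z (z + 1), φ x ≤ Real.exp (K * |Φ x - Φ y|) * φ y) :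
    ∃ ψ : ℝ → ℝ, Cone (K + B) (Φ z) ψ ∧ ∀ H : ℝ → ℝ, (∀ x, H (x + 1) = H x) → Measurable H →
      (∃ N, ∀ x, |H x| ≤ N) →
      ∫ x in Ioo z (z + 1), φ x * H (Φ x) = ∫ y in Ioo (Φ z) (Φ z + 1), ψ y * H y := by
  have hdiff : Differentiable ℝ Φ := fun x => (hΦ.hd x).differentiableAt
  have hpos : ∀ x, 0 < Φd x := fun x => one_pos.trans_le (hΦ.one x)
  have hmono : StrictMono Φ := strictMono_of_deriv_pos fun x => by
    rw [(hΦ.hd x).deriv]; exact hpos x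
  have hsurj : Function.Surjective Φ := by
    have hex : ∀ x y : ℝ, x ≤ y → 1 * (y - x) ≤ Φ y - Φ x := fun x y hxy =>
      mul_sub_le_image_sub_of_le_deriv hdiff (fun x => by rw [(hΦ.hd x).deriv]; exact hΦ.one x) hxy
    refine hdiff.continuous.surjective ?_ ?_
    · refine tendsto_atTop_mono' _ ?_ (tendsto_atTop_add_const_right _ (Φ 0) tendsto_id)
      filter_upwards [eventually_ge_atTop 0] with x hx
      have := hex 0 x hx
      simp only [id]; linarith
    · refine tendsto_atBot_mono' _ ?_ (tendsto_atBot_add_const_right _ (Φ 0) tendsto_id)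
      filter_upwards [eventually_le_atBot 0] with x hx
      have := hex x 0 hx
      simp only [id]; linarith
  let e := hmono.orderIsoOfSurjective Φ hsurj
  let Ψ : ℝ → ℝ := e.symm
  have hΦΨ : ∀ y, Φ (Ψ y) = y := fun y => e.apply_symm_apply y
  have hΨΦ : ∀ x, Ψ (Φ x) = x := fun x => e.symm_apply_apply x
  have hΨc : Continuous Ψ := e.symm.continuous
  have hΨm : StrictMono Ψ := e.symm.strictMono
  have hDpos : 0 < D := by
    have h1 := hmono (show z < z + 1 by linarith)
    rw [hΦ.per] at h1
    have : (0:ℝ) < D := by linarith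
    exact_mod_cast this
  obtain ⟨d, rfl⟩ := Int.eq_ofNat_of_zero_le hDpos.le
  have hper : Φ (z + 1) = Φ z + d := by rw [hΦ.per]; simp
  have hmem : ∀ j < d, ∀ y ∈ Ioo (Φ z) (Φ z + 1), Ψ (y + j) ∈ Ioo z (z + 1) := by
    intro j hj y hy
    have hj' : (j:ℝ) + 1 ≤ d := by exact_mod_cast hj
    have hj0 : (0:ℝ) ≤ j := by positivity
    constructor
    · rw [← hmono.lt_iff_lt, hΦΨ]; linarith [hy.1]
    · rw [← hmono.lt_iff_lt, hΦΨ, hper]; linarith [hy.2]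
  let G : ℝ → ℝ := fun y => φ (Ψ y) / Φd (Ψ y)
  refine ⟨fun y => ∑ j ∈ Finset.range d, G (y + j), ⟨?_, ?_, ?_⟩, ?_⟩
  · refine continuousOn_finsetSum _ fun j hj => ?_
    have h1 : ContinuousOn (fun y : ℝ => Ψ (y + j)) (Ioo (Φ z) (Φ z + 1)) := by fun_prop
    refine ContinuousOn.div (hc.comp h1 (hmem j (Finset.mem_range.1 hj))) 
      (hΦ.cont.comp_continuousOn h1) fun y _ => (hpos _).ne'
  · intro y hy
    refine Finset.sum_nonneg fun j hj => div_nonneg (hnn _ (hmem j (Finset.mem_range.1 hj) y hy)) (hpos _).le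
  · intro y hy y' hy'
    rw [Finset.mul_sum]
    refine Finset.sum_le_sum fun j hj => ?_
    have hj := Finset.mem_range.1 hj
    have h1 := hle _ (hmem j hj y hy) _ (hmem j hj y' hy')
    have h2 := hΦ.dist (Ψ (y' + j)) (Ψ (y + j))
    rw [hΦΨ, hΦΨ] at h1 h2
    rw [show y + j - (y' + j) = y - y' by ring] at h1
    rw [show y' + j - (y + j) = -(y - y') by ring, abs_neg] at h2
    show φ _ / Φd _ ≤ _ * (φ _ / Φd _)
    rw [div_le_iff₀ (hpos _)]
    have hp := hpos (Ψ (y' + j))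
    have hn := hnn _ (hmem j hj y' hy')
    calc φ (Ψ (y + j)) ≤ Real.exp (K * |y - y'|) * φ (Ψ (y' + j)) := h1
      _ = Real.exp (K * |y - y'|) * (φ (Ψ (y' + j)) / Φd (Ψ (y' + j))) * Φd (Ψ (y' + j)) := by
        field_simp
      _ ≤ Real.exp (K * |y - y'|) * (φ (Ψ (y' + j)) / Φd (Ψ (y' + j))) * 
          (Real.exp (B * |y - y'|) * Φd (Ψ (y + j))) := by
        gcongr
      _ = _ := by rw [add_mul, Real.exp_add]; ring
  · intro H hHp hHm ⟨N, hN⟩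
    have himg : Φ '' Ioo z (z + 1) = Ioo (Φ z) (Φ z + d) := by
      rw [← hper]
      exact e.image_Ioo z (z+1)
    have hinj : InjOn Φ (Ioo z (z+1)) := hmono.injective.injOn
    have hd' : ∀ x ∈ Ioo z (z+1), HasDerivWithinAt Φ (Φd x) (Ioo z (z+1)) x :=
      fun x _ => (hΦ.hd x).hasDerivWithinAt
    have hfun : ∀ x, |Φd x| • (G (Φ x) * H (Φ x)) = φ x * H (Φ x) := by
      intro x
      have := hpos x
      simp only [G, hΨΦ, abs_of_pos this, smul_eq_mul]
      field_simp
    have hcv := integral_image_eq_integral_abs_deriv_smul measurableSet_Ioo hd' hinj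
      (fun y => G y * H y)
    simp only [hfun] at hcv
    rw [himg] at hcv
    have hHper : ∀ (j : ℕ) (x : ℝ), H (x + j) = H x := by
      intro j
      induction j with
      | zero => simp
      | succ j ih => intro x; push_cast; rw [← add_assoc, hHp, ih]
    have hint : IntegrableOn (fun x => φ x * H (Φ x)) (Ioo z (z+1)) := by
      have hcone : ∃ C, ∀ x ∈ Ioo z (z+1), |φ x| ≤ C := by
        have hm : z + 1/2 ∈ Ioo z (z+1) := ⟨by linarith, by linarith⟩
        refine ⟨Real.exp (|K| * d) * φ (z + 1/2), fun x hx => ?_⟩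
        rw [abs_of_nonneg (hnn x hx)]
        refine (hle x hx _ hm).trans ?_
        have a1 := hmono hx.1
        have a2 := hmono hx.2
        have a3 := hmono hm.1
        have a4 := hmono hm.2
        have : |Φ x - Φ (z + 1/2)| ≤ d := by rw [abs_le]; constructor <;> linarith
        have := mul_le_mul (le_abs_self K) this (abs_nonneg _) (abs_nonneg _)
        gcongr
        exact hnn _ hm
      obtain ⟨C, hC⟩ := hcone
      refine bdd_integrable (C := C * N) ((hc.aestronglyMeasurable measurableSet_Ioo).mul 
        (hHm.comp hdiff.continuous.measurable).aestronglyMeasurable) ?_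
      intro x hx
      rw [abs_mul]
      exact mul_le_mul (hC x hx) (hN _) (abs_nonneg _) ((abs_nonneg _).trans (hC x hx))
    have hGint : IntegrableOn (fun y => G y * H y) (Ioo (Φ z) (Φ z + d)) := by
      rw [← himg, integrableOn_image_iff_integrableOn_abs_deriv_smul measurableSet_Ioo hd' hinj]
      simpa only [hfun] using hint
    rw [← hcv]
    have hd0 : Φ z ≤ Φ z + d := by simp
    have hsub : ∀ j < d, Ioo (Φ z + j) (Φ z + (j + 1 : ℕ)) ⊆ Ioo (Φ z) (Φ z + d) := by
      intro j hj y hy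
      have hj' : ((j + 1 : ℕ):ℝ) ≤ d := by exact_mod_cast hj
      have hj0 : (0:ℝ) ≤ j := by positivity
      exact ⟨by linarith [hy.1], by linarith [hy.2]⟩
    have hII : ∀ j < d, IntervalIntegrable (fun y => G y * H y) volume (Φ z + j) (Φ z + (j + 1 : ℕ)) := by
      intro j hj
      rw [intervalIntegrable_iff_integrableOn_Ioo_of_le (by simp)]
      exact hGint.mono_set (hsub j hj)
    have hsum := intervalIntegral.sum_integral_adjacent_intervals (a := fun j : ℕ => Φ z + j) hII
    have hL : ∫ y in Ioo (Φ z) (Φ z + d), G y * H y = ∫ y in (Φ z)..(Φ z + d), G y * H y := by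
      rw [intervalIntegral.integral_of_le hd0, integral_Ioc_eq_integral_Ioo]
    have hR : ∀ φ' : ℝ → ℝ, ∫ y in Ioo (Φ z) (Φ z + 1), φ' y = ∫ y in (Φ z)..(Φ z + 1), φ' y := by
      intro φ'
      rw [intervalIntegral.integral_of_le (by linarith), integral_Ioc_eq_integral_Ioo]
    have htr : ∀ j : ℕ, ∫ y in (Φ z + j)..(Φ z + (j + 1 : ℕ)), G y * H y =
        ∫ y in (Φ z)..(Φ z + 1), G (y + j) * H y := by
      intro j
      have := intervalIntegral.integral_comp_add_right (a := Φ z) (b := Φ z + 1)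
        (fun y => G y * H y) (j : ℝ)
      simp only [hHper] at this
      rw [this]; congr 1; push_cast; ring
    rw [hL, hR]
    simp only [Nat.cast_zero, add_zero] at hsum
    rw [← hsum]
    simp_rw [Finset.sum_mul, htr]
    rw [intervalIntegral.integral_finsetSum]
    intro j hj
    have := (hII j (Finset.mem_range.1 hj)).comp_add_right (j : ℝ)
    simp only [hHper] at this
    convert this using 1
    · ring
    · push_cast; ring

lemma CM.diff {lam Astar : ℝ} (T : CM lam Astar) : Differentiable ℝ T.F :=
  T.contDiff.differentiable (by norm_num)

lemma CM.good {lam Astar : ℝ} (hlam : 1 < lam) (hA : 0 < Astar) (T : CM lam Astar) :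
    GLift Astar T.F (deriv T.F) T.deg := by
  have hC1 : ContDiff ℝ 1 (deriv T.F) := by
    have h := T.contDiff
    rw [show (2 : WithTop ℕ∞) = 1 + 1 by norm_num, contDiff_succ_iff_deriv] at h
    exact h.2.2
  have hone : ∀ x, 1 ≤ deriv T.F x := fun x => hlam.le.trans (T.expanding x)
  refine ⟨fun x => (T.diff x).hasDerivAt, hC1.continuous, hone, T.lift_add_one, ?_⟩
  intro x y
  have h1 : ‖deriv T.F x - deriv T.F y‖ ≤ Astar * ‖x - y‖ :=
    Convex.norm_image_sub_le_of_norm_deriv_le (s := univ)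
      (fun x _ => (hC1.differentiable (by norm_num)) x) (fun x _ => T.second_bound x)
      convex_univ (mem_univ _) (mem_univ _)
  rw [Real.norm_eq_abs, Real.norm_eq_abs] at h1
  have h2 := expand_of_deriv T.diff hone x y
  have h3 := (abs_le.1 h1).2
  have h4 := Real.add_one_le_exp (Astar * |T.F x - T.F y|)
  have h5 : Astar * |x - y| ≤ Astar * |T.F x - T.F y| := by nlinarith
  have h6 : 0 ≤ Astar * |T.F x - T.F y| := by positivity
  have h7 := hone y
  nlinarith

lemma GLift.comp {lam B₁ B : ℝ} {F Fd Φ Φd : ℝ → ℝ} {d D : ℤ} (hlam : 1 < lam) (hB : 0 ≤ B)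
    (hF : GLift B₁ F Fd d) (hex : ∀ x y, lam * |x - y| ≤ |F x - F y|) (hΦ : GLift B Φ Φd D)
    (h : B₁ + B / lam ≤ B) : GLift B (F ∘ Φ) (fun x => Fd (Φ x) * Φd x) (d * D) := by
  have hc : Continuous Φ := continuous_iff_continuousAt.2 fun x => (hΦ.hd x).continuousAt
  refine ⟨fun x => (hF.hd (Φ x)).comp x (hΦ.hd x), (hF.cont.comp hc).mul hΦ.cont, ?_, ?_, ?_⟩
  · intro x
    exact one_le_mul_of_one_le_of_one_le (hF.one _) (hΦ.one _)
  · intro x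
    have hnat : ∀ (j : ℕ) y, F (y + j) = F y + d * j := by
      intro j
      induction j with
      | zero => simp
      | succ j ih => intro y; push_cast; rw [← add_assoc, hF.per, ih]; ring
    have hint : ∀ (j : ℤ) y, F (y + j) = F y + d * j := by
      intro j y
      obtain ⟨n, rfl | rfl⟩ := Int.eq_nat_or_neg j
      · simpa using hnat n y
      · have := hnat n (y - n)
        rw [sub_add_cancel] at this
        push_cast
        rw [← sub_eq_add_neg]
        linarith
    simp only [Function.comp]
    rw [hΦ.per, hint]; push_cast; ring
  · intro x y
    have h1 := hF.dist (Φ x) (Φ y)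
    have h2 := hΦ.dist x y
    have h3 := hex (Φ x) (Φ y)
    have h4 : B * |Φ x - Φ y| ≤ B / lam * |F (Φ x) - F (Φ y)| := by
      rw [div_mul_eq_mul_div, le_div_iff₀ (by linarith)]
      nlinarith
    have hp := hF.one (Φ y)
    have hp' := hΦ.one y
    have hq' := hΦ.one x
    simp only [Function.comp]
    calc Fd (Φ x) * Φd x ≤ (Real.exp (B₁ * |F (Φ x) - F (Φ y)|) * Fd (Φ y)) *
          (Real.exp (B * |Φ x - Φ y|) * Φd y) := by
            apply mul_le_mul h1 h2 (by linarith) (by positivity)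
      _ = Real.exp (B₁ * |F (Φ x) - F (Φ y)| + B * |Φ x - Φ y|) * (Fd (Φ y) * Φd y) := by
        rw [Real.exp_add]; ring
      _ ≤ _ := by
        gcongr
        nlinarith [abs_nonneg (F (Φ x) - F (Φ y))]

section
variable {lam Astar : ℝ}

lemma lift_good (hlam : 1 < lam) (hA : 0 < Astar) (Ts : ℕ → CM lam Astar) (k : ℕ) :
    ∃ Φd D, GLift (Astar * lam / (lam - 1)) (liftIter Ts k) Φd D := by
  have h0 : 0 < lam - 1 := by linarith
  have hl : 0 < lam := by linarith
  induction k with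
  | zero =>
    refine ⟨fun _ => 1, 1, fun x => hasDerivAt_id x, continuous_const, fun _ => le_rfl, 
      fun x => by simp [liftIter], fun x y => ?_⟩
    rw [mul_one]
    apply Real.one_le_exp
    positivity
  | succ k ih =>
    obtain ⟨Φd, D, h⟩ := ih
    refine ⟨_, _, GLift.comp hlam (by positivity) ((Ts (k+1)).good hlam hA)
      (expand_of_deriv (Ts (k+1)).diff (Ts (k+1)).expanding) h ?_⟩
    apply le_of_eq
    field_simp
    ring

lemma lift_cont (Ts : ℕ → CM lam Astar) (k : ℕ) : Continuous (liftIter Ts k) := by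
  induction k with
  | zero => exact continuous_id
  | succ k ih => exact (Ts (k+1)).diff.continuous.comp ih

lemma lift_expand (hlam : 1 < lam) (Ts : ℕ → CM lam Astar) (k j : ℕ) (x y : ℝ) :
    lam ^ j * |liftIter Ts k x - liftIter Ts k y| ≤
      |liftIter Ts (k + j) x - liftIter Ts (k + j) y| := by
  induction j with
  | zero => simp
  | succ j ih =>
    have := expand_of_deriv (Ts (k+j+1)).diff (Ts (k+j+1)).expanding
      (liftIter Ts (k + j) x) (liftIter Ts (k + j) y)
    rw [pow_succ]
    refine le_trans ?_ this
    nlinarith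

lemma lift_shift (Ts : ℕ → CM lam Astar) (k j : ℕ) :
    liftIter Ts (k + j) = liftIter (fun i => Ts (i + k)) j ∘ liftIter Ts k := by
  induction j with
  | zero => rfl
  | succ j ih =>
    show (Ts (k+j+1)).F ∘ liftIter Ts (k+j) = ((Ts (j+1+k)).F ∘ liftIter (fun i => Ts (i + k)) j) ∘ liftIter Ts k
    rw [ih, show k + j + 1 = j + 1 + k by ring]
    rfl

lemma lift_per (hlam : 1 < lam) (hA : 0 < Astar) (Ts : ℕ → CM lam Astar) (k : ℕ)
    {H : ℝ → ℝ} (hH : ∀ x, H (x + 1) = H x) (x : ℝ) :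
    H (liftIter Ts k (x + 1)) = H (liftIter Ts k x) := by
  obtain ⟨Φd, D, h⟩ := lift_good hlam hA Ts k
  rw [h.per]
  have : Function.Periodic H 1 := hH
  simpa using this.int_mul D (liftIter Ts k x)

lemma cone_sub {K K' z : ℝ} {φ : ℝ → ℝ} (hK : 0 < K) (hK' : K < K') (h : Cone K z φ) :
    Cone K' z (fun x => φ x - Real.exp (-K) * (1 - K / K') * ∫ y in Ioo z (z + 1), φ y) := by
  set m := ∫ y in Ioo z (z + 1), φ y
  have hK0 : 0 < K' := hK.trans hK'
  have hr1 : K / K' < 1 := by rw [div_lt_one hK0]; exact hK'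
  have hr0 : 0 < K / K' := by positivity
  have hm : ∀ x ∈ Ioo z (z+1), Real.exp (-K) * m ≤ φ x := by
    intro x hx
    have h1 : m ≤ ∫ y in Ioo z (z+1), Real.exp K * φ x := by
      refine setIntegral_mono_on (h.int hK.le) (integrable_const _) measurableSet_Ioo ?_
      intro y hy
      refine (h.le y hy x hx).trans ?_
      have : |y - x| ≤ 1 := by rw [abs_le]; constructor <;> linarith [hx.1, hx.2, hy.1, hy.2]
      gcongr
      · exact h.nonneg _ hx
      · nlinarith
    have h2 : ∫ y in Ioo z (z+1), Real.exp K * φ x = Real.exp K * φ x := by simp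
    rw [h2] at h1
    rw [Real.exp_neg, inv_mul_le_iff₀ (Real.exp_pos _)]
    exact h1
  have hm0 : 0 ≤ m := setIntegral_nonneg measurableSet_Ioo h.nonneg
  have hc : ∀ x ∈ Ioo z (z+1), Real.exp (-K) * (1 - K / K') * m ≤ (1 - K / K') * φ x := by
    intro x hx
    have := hm x hx
    nlinarith
  refine ⟨h.cont.sub continuousOn_const, ?_, ?_⟩
  · intro x hx
    have := hc x hx
    have := h.nonneg x hx
    nlinarith
  · intro x hx y hy
    have h1 := hc y hy
    have h2 := h.le x hx y hy
    have h3 := h.nonneg y hy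
    set u := |x - y|
    have hu : 0 ≤ u := abs_nonneg _
    set c := Real.exp (-K) * (1 - K / K') * m
    -- convexity
    have hconv : Real.exp (K * u) - 1 ≤ K / K' * (Real.exp (K' * u) - 1) := by
      have := convexOn_exp.2 (mem_univ (0:ℝ)) (mem_univ (K' * u)) (show 0 ≤ 1 - K / K' by linarith)
        hr0.le (by ring)
      simp only [smul_eq_mul, mul_zero, zero_add, Real.exp_zero, mul_one] at this
      rw [show K / K' * (K' * u) = K * u by field_simp] at this
      linarith
    have he : 0 ≤ Real.exp (K' * u) - 1 := by
      have := Real.one_le_exp (show 0 ≤ K' * u by positivity)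
      linarith
    have h5 : (Real.exp (K * u) - 1) * φ y ≤ K / K' * (Real.exp (K' * u) - 1) * φ y := by gcongr
    nlinarith

lemma doeblin (hlam : 1 < lam) (hA : 0 < Astar) {K K' : ℝ} (hK : 0 < K) (hKK : K < K')
    (hle : K' / lam + Astar ≤ K) (p : ℕ) :
    ∀ (Ts : ℕ → CM lam Astar) (z : ℝ) (φ₁ φ₂ : ℝ → ℝ), Cone K z φ₁ → Cone K z φ₂ →
    ∀ m, ∫ x in Ioo z (z+1), φ₁ x = m → ∫ x in Ioo z (z+1), φ₂ x = m →
    ∀ (H : ℝ → ℝ) (N : ℝ), (∀ x, H (x + 1) = H x) → Measurable H → (∀ x, |H x| ≤ N) →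
    |(∫ x in Ioo z (z+1), φ₁ x * H (liftIter Ts p x)) -
      ∫ x in Ioo z (z+1), φ₂ x * H (liftIter Ts p x)| ≤
      2 * m * N * (1 - Real.exp (-K) * (1 - K / K')) ^ p := by
  induction p with
  | zero =>
    intro Ts z φ₁ φ₂ h₁ h₂ m hm₁ hm₂ H N hp hH hN
    have key : ∀ φ, Cone K z φ → ∫ x in Ioo z (z+1), φ x = m →
        |∫ x in Ioo z (z+1), φ x * H (liftIter Ts 0 x)| ≤ m * N := by
      intro φ hφ hm
      calc |∫ x in Ioo z (z+1), φ x * H (liftIter Ts 0 x)| ≤ 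
          ∫ x in Ioo z (z+1), |φ x * H (liftIter Ts 0 x)| := abs_integral_le_integral_abs
        _ ≤ ∫ x in Ioo z (z+1), φ x * N := by
          refine setIntegral_mono_on (hφ.int_mul hK.le hH hN).abs ((hφ.int hK.le).mul_const N)
            measurableSet_Ioo ?_
          intro x hx
          rw [abs_mul, abs_of_nonneg (hφ.nonneg x hx)]
          exact mul_le_mul_of_nonneg_left (hN _) (hφ.nonneg x hx)
        _ = m * N := by rw [integral_mul_const, hm]
    have a := key _ h₁ hm₁
    have b := key _ h₂ hm₂
    rw [abs_le] at *
    constructor <;> simp only [pow_zero, mul_one] <;> linarith [a.1, a.2, b.1, b.2]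
  | succ p ih =>
    intro Ts z φ₁ φ₂ h₁ h₂ m hm₁ hm₂ H N hp hH hN
    set c := Real.exp (-K) * (1 - K / K')
    have hsh : liftIter Ts (p + 1) = liftIter (fun i => Ts (i + 1)) p ∘ (Ts 1).F := by
      rw [add_comm, lift_shift]; rfl
    set H' : ℝ → ℝ := fun y => H (liftIter (fun i => Ts (i + 1)) p y) with hH'
    have hp' : ∀ x, H' (x + 1) = H' x := lift_per hlam hA _ _ hp
    have hm' : Measurable H' := hH.comp (lift_cont _ _).measurable
    have hN' : ∀ x, |H' x| ≤ N := fun x => hN _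
    have hl0 : 0 < lam := by linarith
    have key : ∀ φ, Cone K z φ → ∫ x in Ioo z (z+1), φ x = m →
        ∃ ψ, Cone K ((Ts 1).F z) ψ ∧ ∫ x in Ioo ((Ts 1).F z) ((Ts 1).F z+1), ψ x = (1 - c) * m ∧
          (∫ x in Ioo z (z+1), φ x * H (liftIter Ts (p+1) x)) - c * m * ∫ x in Ioo z (z+1), H (liftIter Ts (p+1) x)
           = ∫ x in Ioo ((Ts 1).F z) ((Ts 1).F z+1), ψ x * H' x := by
      intro φ hφ hm
      have hs := cone_sub hK hKK hφ
      rw [hm] at hs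
      obtain ⟨ψ, hψ, hψi⟩ := push (K := K' / lam) ((Ts 1).good hlam hA) (z := z) (by have := hK.trans hKK; positivity) hs.cont hs.nonneg (by
        intro x hx y hy
        refine (hs.le x hx y hy).trans ?_
        refine mul_le_mul_of_nonneg_right ?_ (hs.nonneg y hy)
        apply Real.exp_le_exp.2
        rw [div_mul_eq_mul_div, le_div_iff₀ hl0]
        have := expand_of_deriv (Ts 1).diff (Ts 1).expanding x y
        nlinarith)
      refine ⟨ψ, ⟨hψ.cont, hψ.nonneg, fun x hx y hy => (hψ.le x hx y hy).trans ?_⟩, ?_, ?_⟩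
      · refine mul_le_mul_of_nonneg_right ?_ (hψ.nonneg y hy)
        gcongr
      · have := hψi (fun _ => 1) (fun _ => rfl) measurable_const ⟨1, by simp⟩
        simp only [mul_one] at this
        rw [← this, integral_sub (hφ.int hK.le) (integrable_const _), hm]
        simp
        ring
      · rw [← hψi H' hp' hm' ⟨N, hN'⟩, hsh]
        have e : ∀ x, H ((liftIter (fun i => Ts (i + 1)) p ∘ (Ts 1).F) x) = H' ((Ts 1).F x) := fun x => rfl
        simp only [e]
        have hmm : Measurable fun x => H' ((Ts 1).F x) := hm'.comp (Ts 1).diff.continuous.measurable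
        rw [← integral_const_mul, ← integral_sub (hφ.int_mul hK.le hmm fun x => hN' _)]
        · congr 1; ext x; ring
        · refine Integrable.const_mul ?_ _
          exact bdd_integrable hmm.aestronglyMeasurable (fun x _ => hN' _)
    obtain ⟨ψ₁, c₁, i₁, e₁⟩ := key _ h₁ hm₁
    obtain ⟨ψ₂, c₂, i₂, e₂⟩ := key _ h₂ hm₂
    have := ih (fun i => Ts (i+1)) _ ψ₁ ψ₂ c₁ c₂ _ i₁ i₂ H N hp hH hN
    rw [← hH'] at *
    rw [show (fun x => ψ₁ x * H (liftIter (fun i => Ts (i + 1)) p x)) = fun x => ψ₁ x * H' x from rfl,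
      show (fun x => ψ₂ x * H (liftIter (fun i => Ts (i + 1)) p x)) = fun x => ψ₂ x * H' x from rfl,
      ← e₁, ← e₂, sub_sub_sub_cancel_right] at this
    refine this.trans (le_of_eq ?_)
    ring

end

section
variable {lam Astar : ℝ}

lemma decor (hlam : 1 < lam) (hA : 0 < Astar) {L : ℝ} (hL : 0 < L) :
    ∃ σ : ℝ, 0 < σ ∧ σ < 1 ∧ ∀ (Ts : ℕ → CM lam Astar) (z : ℝ) (r : ℝ → ℝ), Cone L z r →
    ∫ x in Ioo z (z+1), r x = 1 → ∀ (k p : ℕ) (g : ℝ → ℝ) (M Λ : ℝ), Continuous g →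
    (∀ x, |g x| ≤ M) → 0 ≤ Λ →
    (∀ x y, |g x - g y| ≤ Λ * |liftIter Ts k x - liftIter Ts k y|) →
    ∀ (H : ℝ → ℝ) (N : ℝ), (∀ x, H (x + 1) = H x) → Measurable H → (∀ x, |H x| ≤ N) →
    |(∫ x in Ioo z (z+1), g x * H (liftIter Ts (k + p) x) * r x) -
      (∫ x in Ioo z (z+1), g x * r x) * ∫ x in Ioo z (z+1), H (liftIter Ts (k + p) x) * r x| ≤
      2 * (2 * M + Λ) * N * (σ ^ 3) ^ p := by
  have h0 : 0 < lam - 1 := by linarith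
  have hl0 : 0 < lam := by linarith
  set B := Astar * lam / (lam - 1) with hB
  have hB0 : 0 < B := by positivity
  set K := L + 1 + 3 * B with hK
  have hK0 : 0 < K := by positivity
  set K' := K * (1 + lam) / 2 with hK'
  have hK'0 : 0 < K' := by positivity
  have hKK : K < K' := by rw [hK']; nlinarith
  have hle : K' / lam + Astar ≤ K := by
    have h1 : Astar = B * (lam - 1) / lam := by rw [hB]; field_simp
    rw [h1, hK', div_div, div_add_div _ _ (by positivity) hl0.ne', div_le_iff₀ (by positivity)]
    have : 3 * B ≤ K := by rw [hK]; linarith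
    nlinarith [mul_pos hl0 h0, mul_le_mul_of_nonneg_right this (mul_pos hl0 h0).le, mul_pos (mul_pos hl0 h0) hB0]
  set c := Real.exp (-K) * (1 - K / K') with hc
  have hr1 : K / K' < 1 := by rw [div_lt_one hK'0]; exact hKK
  have hr0 : 0 < K / K' := by positivity
  have hc0 : 0 < c := mul_pos (Real.exp_pos _) (by linarith)
  have hc1 : c < 1 := by
    have : Real.exp (-K) ≤ 1 := Real.exp_le_one_iff.2 (by linarith)
    have h2 := Real.exp_pos (-K)
    rw [hc]; nlinarith
  refine ⟨1 - c / 3, by linarith, by linarith, ?_⟩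
  have hpow : 1 - c ≤ (1 - c / 3) ^ 3 := by
    have := one_add_mul_le_pow (a := - (c/3)) (by linarith) 3
    push_cast at this
    rw [← sub_eq_add_neg] at this
    linarith
  intro Ts z r hr hr1' k p g M Λ hg hM hΛ hlip H N hp hH hN
  have hM0 : 0 ≤ M := (abs_nonneg _).trans (hM 0)
  have hN0 : 0 ≤ N := (abs_nonneg _).trans (hN 0)
  obtain ⟨Φd, D, hΦ⟩ := lift_good hlam hA Ts k
  set Φ := liftIter Ts k with hΦdef
  have hexp : ∀ x y, |x - y| ≤ |Φ x - Φ y| := by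
    intro x y
    have := lift_expand hlam Ts 0 k x y
    rw [zero_add] at this
    refine le_trans ?_ this
    have h1 : 1 ≤ lam ^ k := one_le_pow₀ hlam.le
    show |x - y| ≤ lam ^ k * |x - y|
    nlinarith [abs_nonneg (x - y)]
  have hrle : ∀ x ∈ Ioo z (z+1), ∀ y ∈ Ioo z (z+1), r x ≤ Real.exp (L * |Φ x - Φ y|) * r y := by
    intro x hx y hy
    refine (hr.le x hx y hy).trans (mul_le_mul_of_nonneg_right ?_ (hr.nonneg y hy))
    exact Real.exp_le_exp.2 (mul_le_mul_of_nonneg_left (hexp x y) hL.le)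
  set C := M + Λ
  have hgC : ∀ x, Λ ≤ g x + C := fun x => by have := (abs_le.1 (hM x)).1; simp only [C]; linarith
  have hgle : ∀ x y, g x + C ≤ Real.exp (|Φ x - Φ y|) * (g y + C) := by
    intro x y
    have h1 := (abs_le.1 (hlip x y)).2
    have h2 := hgC y
    have h3 := Real.add_one_le_exp (|Φ x - Φ y|)
    have h4 := abs_nonneg (Φ x - Φ y)
    have h5 : Λ * |Φ x - Φ y| ≤ (g y + C) * |Φ x - Φ y| := by gcongr
    have h6 : (|Φ x - Φ y| + 1) * (g y + C) ≤ Real.exp (|Φ x - Φ y|) * (g y + C) := by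
      gcongr
      linarith
    linarith
  set a := (∫ x in Ioo z (z+1), g x * r x) + C with ha
  have hrm := hr.int hL.le
  have hgr : IntegrableOn (fun x => g x * r x) (Ioo z (z+1)) := by
    simp_rw [mul_comm (g _)]
    exact hr.int_mul hL.le hg.measurable hM
  have ha1 : a = ∫ x in Ioo z (z+1), (g x + C) * r x := by
    simp_rw [add_mul]
    rw [integral_add hgr (hrm.const_mul C), integral_const_mul, hr1', ha, mul_one]
  have ha0 : 0 ≤ a := by
    rw [ha1]
    exact setIntegral_nonneg measurableSet_Ioo fun x hx =>
      mul_nonneg (hΛ.trans (hgC x)) (hr.nonneg x hx)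
  have hale : a ≤ 2 * M + Λ := by
    have : a ≤ ∫ x in Ioo z (z+1), (2 * M + Λ) * r x := by
      rw [ha1]
      refine setIntegral_mono_on ?_ (hrm.const_mul _) measurableSet_Ioo ?_
      · simp_rw [add_mul]
        exact hgr.add (hrm.const_mul C)
      · intro x hx
        have := (abs_le.1 (hM x)).2
        refine mul_le_mul_of_nonneg_right ?_ (hr.nonneg x hx)
        simp only [C]; linarith
    rwa [integral_const_mul, hr1', mul_one] at this
  obtain ⟨ψ₁, hψ₁, i₁⟩ := push (K := L + 1) hΦ (z := z) (φ := fun x => (g x + C) * r x) (by positivity)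
    ((hg.add continuous_const).continuousOn.mul hr.cont)
    (fun x hx => mul_nonneg (hΛ.trans (hgC x)) (hr.nonneg x hx)) (by
      intro x hx y hy
      have h1 := hrle x hx y hy
      have h2 := hgle x y
      calc (g x + C) * r x ≤ (Real.exp (|Φ x - Φ y|) * (g y + C)) * (Real.exp (L * |Φ x - Φ y|) * r y) :=
            mul_le_mul h2 h1 (hr.nonneg x hx) (mul_nonneg (Real.exp_pos _).le (hΛ.trans (hgC y)))
        _ = _ := by rw [add_mul, Real.exp_add, one_mul]; ring)
  obtain ⟨ψ₂, hψ₂, i₂⟩ := push (K := L) hΦ (z := z) (φ := fun x => a * r x) (by positivity)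
    (continuousOn_const.mul hr.cont)
    (fun x hx => mul_nonneg ha0 (hr.nonneg x hx)) (by
      intro x hx y hy
      have h1 := hrle x hx y hy
      calc a * r x ≤ a * (Real.exp (L * |Φ x - Φ y|) * r y) := by gcongr
        _ = _ := by ring)
  have cmono : ∀ {K₁ z ψ}, K₁ ≤ K → Cone K₁ z ψ → Cone K z ψ := by
    intro K₁ z ψ h hψ
    refine ⟨hψ.cont, hψ.nonneg, fun x hx y hy => (hψ.le x hx y hy).trans ?_⟩
    refine mul_le_mul_of_nonneg_right ?_ (hψ.nonneg y hy)
    gcongr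
  have hψ₁' := cmono (by rw [hK]; linarith) hψ₁
  have hψ₂' := cmono (by rw [hK]; linarith) hψ₂
  have m₁ := i₁ (fun _ => 1) (fun _ => rfl) measurable_const ⟨1, by simp⟩
  have m₂ := i₂ (fun _ => 1) (fun _ => rfl) measurable_const ⟨1, by simp⟩
  simp only [mul_one] at m₁ m₂
  rw [← ha1] at m₁
  rw [integral_const_mul, hr1', mul_one] at m₂
  have hd := doeblin hlam hA hK0 hKK hle p (fun i => Ts (i + k)) (Φ z) ψ₁ ψ₂ hψ₁' hψ₂' a m₁.symm m₂.symm
    H N hp hH hN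
  set H' : ℝ → ℝ := fun y => H (liftIter (fun i => Ts (i + k)) p y) with hH'
  have hp' : ∀ x, H' (x + 1) = H' x := lift_per hlam hA _ _ hp
  have hm' : Measurable H' := hH.comp (lift_cont _ _).measurable
  have hN' : ∀ x, |H' x| ≤ N := fun x => hN _
  have j₁ := i₁ H' hp' hm' ⟨N, hN'⟩
  have j₂ := i₂ H' hp' hm' ⟨N, hN'⟩
  rw [show (fun x => ψ₁ x * H (liftIter (fun i => Ts (i + k)) p x)) = fun x => ψ₁ x * H' x from rfl,
      show (fun x => ψ₂ x * H (liftIter (fun i => Ts (i + k)) p x)) = fun x => ψ₂ x * H' x from rfl,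
      ← j₁, ← j₂] at hd
  have hHe : ∀ x, H (liftIter Ts (k + p) x) = H' (Φ x) := fun x => by rw [lift_shift]; rfl
  simp only [hHe]
  have hmm : Measurable fun x => H' (Φ x) := hm'.comp (lift_cont _ _).measurable
  have I1 : IntegrableOn (fun x => H' (Φ x) * r x) (Ioo z (z+1)) := by
    simp_rw [mul_comm _ (r _)]
    exact hr.int_mul hL.le hmm fun x => hN' _
  have I2 : IntegrableOn (fun x => g x * H' (Φ x) * r x) (Ioo z (z+1)) := by
    simp_rw [mul_comm _ (r _)]
    refine hr.int_mul (N := M * N) hL.le (hg.measurable.mul hmm) fun x => ?_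
    rw [abs_mul]
    exact mul_le_mul (hM x) (hN' _) (abs_nonneg _) hM0
  have e1 : ∫ x in Ioo z (z+1), (g x + C) * r x * H' (Φ x) =
      (∫ x in Ioo z (z+1), g x * H' (Φ x) * r x) + C * ∫ x in Ioo z (z+1), H' (Φ x) * r x := by
    rw [← integral_const_mul, ← integral_add I2 (I1.const_mul C)]
    congr 1; ext x; ring
  have e2 : ∫ x in Ioo z (z+1), a * r x * H' (Φ x) = a * ∫ x in Ioo z (z+1), H' (Φ x) * r x := by
    rw [← integral_const_mul]
    congr 1; ext x; ring
  rw [e1, e2] at hd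
  have e3 : ∀ u v : ℝ, u + C * v - a * v = u - (∫ x in Ioo z (z+1), g x * r x) * v := by
    intro u v; rw [ha]; ring
  rw [e3] at hd
  refine hd.trans ?_
  have hc1' : 0 ≤ 1 - c := by linarith
  gcongr

noncomputable def wInt (z : ℝ) (r u : ℝ → ℝ) : ℝ := ∫ x in Ioo z (z+1), u x * r x

noncomputable def wCov (z : ℝ) (r u v : ℝ → ℝ) : ℝ :=
  wInt z r (fun x => u x * v x) - wInt z r u * wInt z r v

def BM (u : ℝ → ℝ) : Prop := Measurable u ∧ ∃ N, ∀ x, |u x| ≤ N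

lemma BM.mul {u v : ℝ → ℝ} (hu : BM u) (hv : BM v) : BM (fun x => u x * v x) := by
  obtain ⟨hu, N, hN⟩ := hu
  obtain ⟨hv, N', hN'⟩ := hv
  refine ⟨hu.mul hv, N * N', fun x => ?_⟩
  rw [abs_mul]
  exact mul_le_mul (hN x) (hN' x) (abs_nonneg _) ((abs_nonneg _).trans (hN x))

lemma BM.add {u v : ℝ → ℝ} (hu : BM u) (hv : BM v) : BM (fun x => u x + v x) := by
  obtain ⟨hu, N, hN⟩ := hu
  obtain ⟨hv, N', hN'⟩ := hv
  refine ⟨hu.add hv, N + N', fun x => (abs_add_le _ _).trans (add_le_add (hN x) (hN' x))⟩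

lemma BM.const (c : ℝ) : BM (fun _ => c) := ⟨measurable_const, |c|, fun _ => le_rfl⟩

lemma BM.sum {u : ℕ → ℝ → ℝ} (hu : ∀ i, BM (u i)) (b : ℕ → ℝ) (q : ℕ) :
    BM (fun x => ∑ i ∈ Finset.range q, b i * u i x) := by
  induction q with
  | zero => simpa using BM.const 0
  | succ q ih =>
    simp_rw [Finset.sum_range_succ]
    exact ih.add ((BM.const _).mul (hu q))

lemma BM.int {L z : ℝ} {r u : ℝ → ℝ} (hL : 0 < L) (hr : Cone L z r) (hu : BM u) :
    IntegrableOn (fun x => u x * r x) (Ioo z (z+1)) := by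
  obtain ⟨hu, N, hN⟩ := hu
  simp_rw [mul_comm _ (r _)]
  exact hr.int_mul hL.le hu hN

lemma wInt_add {L z : ℝ} {r u v : ℝ → ℝ} (hL : 0 < L) (hr : Cone L z r) (hu : BM u) (hv : BM v) :
    wInt z r (fun x => u x + v x) = wInt z r u + wInt z r v := by
  unfold wInt
  simp_rw [add_mul]
  exact integral_add (hu.int hL hr) (hv.int hL hr)

lemma wInt_smul {z : ℝ} {r u : ℝ → ℝ} (c : ℝ) :
    wInt z r (fun x => c * u x) = c * wInt z r u := by
  unfold wInt
  simp_rw [mul_assoc]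
  exact integral_const_mul _ _

lemma wInt_const {z : ℝ} {r : ℝ → ℝ} (h1 : ∫ x in Ioo z (z+1), r x = 1) (c : ℝ) :
    wInt z r (fun _ => c) = c := by
  unfold wInt
  rw [integral_const_mul, h1, mul_one]

lemma wInt_bound {L z N : ℝ} {r u : ℝ → ℝ} (hL : 0 < L) (hr : Cone L z r)
    (h1 : ∫ x in Ioo z (z+1), r x = 1) (hu : Measurable u) (hN : ∀ x, |u x| ≤ N) :
    |wInt z r u| ≤ N := by
  unfold wInt
  calc |∫ x in Ioo z (z+1), u x * r x| ≤ ∫ x in Ioo z (z+1), |u x * r x| :=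
        abs_integral_le_integral_abs
    _ ≤ ∫ x in Ioo z (z+1), N * r x := by
      have hB : BM u := ⟨hu, N, hN⟩
      refine setIntegral_mono_on (hB.int hL hr).abs ((hr.int hL.le).const_mul N)
            measurableSet_Ioo ?_
      intro x hx
      rw [abs_mul, abs_of_nonneg (hr.nonneg x hx)]
      exact mul_le_mul_of_nonneg_right (hN _) (hr.nonneg x hx)
    _ = N := by rw [integral_const_mul, h1, mul_one]

lemma wCov_sum {L z : ℝ} {r G : ℝ → ℝ} (hL : 0 < L) (hr : Cone L z r) (hG : BM G)
    {u : ℕ → ℝ → ℝ} (hu : ∀ i, BM (u i)) (b : ℕ → ℝ) (q : ℕ) :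
    wCov z r G (fun x => ∑ i ∈ Finset.range q, b i * u i x) =
      ∑ i ∈ Finset.range q, b i * wCov z r G (u i) := by
  induction q with
  | zero => simp [wCov, wInt]
  | succ q ih =>
    rw [Finset.sum_range_succ, ← ih]
    simp_rw [Finset.sum_range_succ]
    unfold wCov
    have e : (fun x => G x * (∑ i ∈ Finset.range q, b i * u i x + b q * u q x)) =
      fun x => G x * (∑ i ∈ Finset.range q, b i * u i x) + b q * (G x * u q x) := by
      ext x; ring
    rw [e, wInt_add hL hr (hG.mul (BM.sum hu b q)) ((BM.const _).mul (hG.mul (hu q))),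
      wInt_add hL hr (BM.sum hu b q) ((BM.const _).mul (hu q)), wInt_smul, wInt_smul]
    ring

lemma covsum1 {L z C σ : ℝ} {r G : ℝ → ℝ} (hL : 0 < L) (hr : Cone L z r) (hG : BM G)
    {u : ℕ → ℝ → ℝ} (hu : ∀ i, BM (u i)) {b : ℕ → ℝ} (hb : ∀ i, |b i| ≤ 1) (q : ℕ)
    (hσ0 : 0 < σ) (hσ1 : σ < 1) (hC : ∀ i, |wCov z r G (u i)| ≤ C * σ ^ i) :
    |wCov z r G (fun x => ∑ i ∈ Finset.range q, b i * u i x)| ≤ C / (1 - σ) := by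
  rw [wCov_sum hL hr hG hu]
  have hC0 : 0 ≤ C := by have := (abs_nonneg _).trans (hC 0); simpa using this
  calc |∑ i ∈ Finset.range q, b i * wCov z r G (u i)| ≤ ∑ i ∈ Finset.range q, |b i * wCov z r G (u i)| :=
        Finset.abs_sum_le_sum_abs _ _
    _ ≤ ∑ i ∈ Finset.range q, C * σ ^ i := by
      refine Finset.sum_le_sum fun i _ => ?_
      rw [abs_mul]
      have := hC i
      nlinarith [hb i, abs_nonneg (b i), abs_nonneg (wCov z r G (u i))]
    _ = C * ∑ i ∈ Finset.range q, σ ^ i := by rw [Finset.mul_sum]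
    _ ≤ C * (1 - σ)⁻¹ := by
      gcongr
      rw [← tsum_geometric_of_lt_one hσ0.le hσ1]
      exact (summable_geometric_of_lt_one hσ0.le hσ1).sum_le_tsum _ (fun i _ => by positivity)
    _ = _ := by rw [div_eq_mul_inv]

lemma covsum2 {L z C σ : ℝ} {r G : ℝ → ℝ} (hL : 0 < L) (hr : Cone L z r) (hG : BM G)
    {u : ℕ → ℝ → ℝ} (hu : ∀ i, BM (u i)) {b : ℕ → ℝ} (hb : ∀ i, |b i| ≤ 1) (q : ℕ)
    (hσ0 : 0 < σ) (hσ1 : σ < 1)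
    (hC : ∀ i j, |wCov z r G (fun x => u i x * u j x)| ≤ C * σ ^ i * σ ^ j) :
    |wCov z r G (fun x => (∑ i ∈ Finset.range q, b i * u i x) ^ 2)| ≤ C / (1 - σ) / (1 - σ) := by
  have e : (fun x => (∑ i ∈ Finset.range q, b i * u i x) ^ 2) =
      fun x => ∑ i ∈ Finset.range q, b i * (∑ j ∈ Finset.range q, b j * (u i x * u j x)) := by
    ext x
    rw [sq, Finset.sum_mul]
    refine Finset.sum_congr rfl fun i _ => ?_
    rw [Finset.mul_sum, Finset.mul_sum]
    refine Finset.sum_congr rfl fun j _ => ?_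
    ring
  rw [e]
  refine covsum1 (u := fun i x => ∑ j ∈ Finset.range q, b j * (u i x * u j x)) hL hr hG
    (fun i => BM.sum (u := fun j x => u i x * u j x) (fun j => (hu i).mul (hu j)) b q) hb q hσ0 hσ1 ?_
  intro i
  have := covsum1 (u := fun j x => u i x * u j x) hL hr hG (fun j => (hu i).mul (hu j)) hb q hσ0 hσ1 (hC i)
  refine this.trans (le_of_eq ?_)
  ring

end

section
variable {lam Astar : ℝ}

def DecP (Ts : ℕ → CM lam Astar) (z : ℝ) (r : ℝ → ℝ) (σ : ℝ) : Prop :=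
  ∀ (k p : ℕ) (g : ℝ → ℝ) (M Λ : ℝ), Continuous g →
    (∀ x, |g x| ≤ M) → 0 ≤ Λ →
    (∀ x y, |g x - g y| ≤ Λ * |liftIter Ts k x - liftIter Ts k y|) →
    ∀ (H : ℝ → ℝ) (N : ℝ), (∀ x, H (x + 1) = H x) → Measurable H → (∀ x, |H x| ≤ N) →
    |wCov z r g (fun x => H (liftIter Ts (k + p) x))| ≤ 2 * (2 * M + Λ) * N * (σ ^ 3) ^ p

lemma cov_Y {Ts : ℕ → CM lam Astar} {z σ : ℝ} {r : ℝ → ℝ} (hdec : DecP Ts z r σ)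
    (hσ0 : 0 < σ) (hσ1 : σ < 1) {h G : ℝ → ℝ} {M MG ΛG : ℝ} (hh : Continuous h)
    (hper : ∀ x, h (x + 1) = h x) (hM : ∀ x, |h x| ≤ M) (hGc : Continuous G)
    (hGM : ∀ x, |G x| ≤ MG) (hΛ : 0 ≤ ΛG) (m : ℕ)
    (hGL : ∀ x y, |G x - G y| ≤ ΛG * |liftIter Ts m x - liftIter Ts m y|) (i : ℕ) :
    |wCov z r G (fun x => h (liftIter Ts (m + i) x))| ≤ 2 * (2 * MG + ΛG) * M * σ ^ i := by
  refine (hdec m i G MG ΛG hGc hGM hΛ hGL h M hper hh.measurable hM).trans ?_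
  have hM0 : 0 ≤ M := (abs_nonneg _).trans (hM 0)
  have hMG0 : 0 ≤ MG := (abs_nonneg _).trans (hGM 0)
  gcongr
  exact pow_le_of_le_one hσ0.le hσ1.le (by norm_num)

lemma cov_XX_aux (hlam : 1 < lam) (hA : 0 < Astar) {Ts : ℕ → CM lam Astar} {L z σ : ℝ} {r : ℝ → ℝ}
    (hL : 0 < L) (hr : Cone L z r) (h1 : ∫ x in Ioo z (z+1), r x = 1) (hdec : DecP Ts z r σ)
    (hσ0 : 0 < σ) (hσ1 : σ < 1) {h G : ℝ → ℝ} {M Kf MG ΛG : ℝ} (hh : Continuous h)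
    (hper : ∀ x, h (x + 1) = h x) (hM : ∀ x, |h x| ≤ M) (hKf : 0 ≤ Kf)
    (hLip : ∀ x y, |h x - h y| ≤ Kf * |x - y|) (hGc : Continuous G)
    (hGM : ∀ x, |G x| ≤ MG) (hΛ : 0 ≤ ΛG) (m : ℕ)
    (hGL : ∀ x y, |G x - G y| ≤ ΛG * |liftIter Ts m x - liftIter Ts m y|)
    (e : ℕ → ℝ) (he : ∀ k, e k = wInt z r (fun x => h (liftIter Ts k x))) (i j : ℕ) (hij : i ≤ j) :
    |wCov z r G (fun x => (h (liftIter Ts (m + i) x) - e (m + i)) *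
      (h (liftIter Ts (m + j) x) - e (m + j)))| ≤
      (2 * (2 * MG + ΛG) * (2 * M * (2 * M)) +
        (2 * (2 * (MG * (2 * M)) + (MG * Kf + 2 * M * ΛG)) * (2 * M) +
          MG * (2 * (2 * (2 * M) + Kf) * (2 * M)))) * σ ^ i * σ ^ j := by
  have hM0 : 0 ≤ M := (abs_nonneg _).trans (hM 0)
  have hMG0 : 0 ≤ MG := (abs_nonneg _).trans (hGM 0)
  have hYm : ∀ k, Measurable fun x => h (liftIter Ts k x) := fun k =>
    (hh.comp (lift_cont Ts k)).measurable
  have heb : ∀ k, |e k| ≤ M := fun k => by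
    rw [he]; exact wInt_bound hL hr h1 (hYm k) fun x => hM _
  have hXb : ∀ k y, |h y - e k| ≤ 2 * M := fun k y => by
    have := abs_sub (h y) (e k)
    linarith [hM y, heb k]
  have hX0 : ∀ k, wInt z r (fun x => h (liftIter Ts k x) - e k) = 0 := by
    intro k
    simp_rw [sub_eq_add_neg]
    rw [wInt_add hL hr ⟨hYm k, M, fun x => hM _⟩ (BM.const _), wInt_const h1, ← he]
    ring
  obtain ⟨d, rfl⟩ := Nat.exists_eq_add_of_le hij
  set Ca := 2 * (2 * MG + ΛG) * (2 * M * (2 * M)) with hCa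
  set Cb := 2 * (2 * (MG * (2 * M)) + (MG * Kf + 2 * M * ΛG)) * (2 * M) +
          MG * (2 * (2 * (2 * M) + Kf) * (2 * M)) with hCb
  have hCa0 : 0 ≤ Ca := by positivity
  have hCb0 : 0 ≤ Cb := by positivity
  set X : ℕ → ℝ → ℝ := fun k x => h (liftIter Ts k x) - e k with hX
  have hXc : ∀ k, Continuous (X k) := fun k => (hh.comp (lift_cont Ts k)).sub continuous_const
  have hXL : ∀ k x y, |X k x - X k y| ≤ Kf * |liftIter Ts k x - liftIter Ts k y| := by
    intro k x y
    simp only [hX, sub_sub_sub_cancel_right]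
    exact hLip _ _
  have hXbb : ∀ k x, |X k x| ≤ 2 * M := fun k x => hXb k _
  show |wCov z r G (fun x => X (m + i) x * X (m + (i + d)) x)| ≤ _
  -- first bound
  have ba : |wCov z r G (fun x => X (m + i) x * X (m + (i + d)) x)| ≤ Ca * (σ ^ 3) ^ i := by
    have := hdec m i G MG ΛG hGc hGM hΛ hGL
      (fun y => (h y - e (m + i)) * (h (liftIter (fun l => Ts (l + (m + i))) d y) - e (m + (i + d))))
      (2 * M * (2 * M)) ?_ ?_ ?_
    · simp only [hX]
      have e2 : ∀ x, liftIter Ts (m + (i + d)) x =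
          liftIter (fun l => Ts (l + (m + i))) d (liftIter Ts (m + i) x) := by
        intro x
        rw [← add_assoc, lift_shift]; rfl
      simp only [e2]
      exact this
    · intro x
      rw [hper, lift_per hlam hA _ _ hper]
    · exact (hh.measurable.sub_const _).mul
        ((hh.comp (lift_cont _ _)).measurable.sub_const _)
    · intro x
      rw [abs_mul]
      exact mul_le_mul (hXb _ _) (hXb _ _) (abs_nonneg _) (by positivity)
  have hHper : ∀ k x, h (x + 1) - e k = h x - e k := fun k x => by rw [hper]
  have bb : |wCov z r G (fun x => X (m + i) x * X (m + (i + d)) x)| ≤ Cb * (σ ^ 3) ^ d := by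
    have b1 := hdec (m + i) d (X (m + i)) (2 * M) Kf (hXc _) (hXbb _) hKf (hXL _)
      (fun y => h y - e (m + i + d)) (2 * M) (hHper _) (hh.measurable.sub_const _) (hXb _)
    have b2 := hdec (m + i) d (fun x => G x * X (m + i) x) (MG * (2 * M)) (MG * Kf + 2 * M * ΛG)
      (hGc.mul (hXc _)) (fun x => by
        rw [abs_mul]
        exact mul_le_mul (hGM x) (hXbb _ x) (abs_nonneg _) hMG0) (by positivity) (by
        intro x y
        have h3 := hXL (m + i) x y
        have h4 := hGL x y
        have h5 : |liftIter Ts m x - liftIter Ts m y| ≤ 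
            |liftIter Ts (m + i) x - liftIter Ts (m + i) y| := by
          refine le_trans ?_ (lift_expand hlam Ts m i x y)
          have h1 : 1 ≤ lam ^ i := one_le_pow₀ hlam.le
          nlinarith [abs_nonneg (liftIter Ts m x - liftIter Ts m y)]
        set w := |liftIter Ts (m + i) x - liftIter Ts (m + i) y|
        have h6 : |G x - G y| ≤ ΛG * w := h4.trans (by gcongr)
        calc |G x * X (m + i) x - G y * X (m + i) y| = 
            |G x * (X (m + i) x - X (m + i) y) + X (m + i) y * (G x - G y)| := by congr 1; ring
          _ ≤ |G x| * |X (m + i) x - X (m + i) y| + |X (m + i) y| * |G x - G y| := by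
            refine (abs_add_le _ _).trans ?_
            rw [abs_mul, abs_mul]
          _ ≤ MG * (Kf * w) + 2 * M * (ΛG * w) := by
            gcongr
            · exact hGM x
            · exact hXbb _ y
          _ = _ := by ring)
      (fun y => h y - e (m + i + d)) (2 * M) (hHper _) (hh.measurable.sub_const _) (hXb _)
    have b3 := hX0 (m + i + d)
    have b4 : |wInt z r G| ≤ MG := wInt_bound hL hr h1 hGc.measurable hGM
    unfold wCov at b1 b2 ⊢
    rw [b3, mul_zero, sub_zero] at b1 b2
    rw [← add_assoc m i d]
    have e3 : (fun x => G x * (X (m + i) x * X (m + i + d) x)) =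
        fun x => G x * X (m + i) x * (h (liftIter Ts (m + i + d) x) - e (m + i + d)) := by
      ext x; simp only [hX]; ring
    rw [e3]
    refine (abs_sub _ _).trans ?_
    rw [abs_mul]
    have b5 := mul_le_mul b4 b1 (abs_nonneg _) hMG0
    rw [hCb, add_mul, mul_assoc MG]
    exact add_le_add b2 b5
  have hp : ∀ a b : ℕ, b ≤ 3 * a → (σ ^ 3) ^ a ≤ σ ^ b := fun a b hab => by
    rw [← pow_mul]; exact pow_le_pow_of_le_one hσ0.le hσ1.le hab
  rw [mul_assoc, ← pow_add]
  have hs := pow_pos hσ0 (i + (i + d))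
  rcases le_total d i with hdi | hdi
  · have := hp i (i + (i + d)) (by omega)
    refine ba.trans ?_
    nlinarith
  · have := hp d (i + (i + d)) (by omega)
    refine bb.trans ?_
    nlinarith

lemma cov_XX (hlam : 1 < lam) (hA : 0 < Astar) {Ts : ℕ → CM lam Astar} {L z σ : ℝ} {r : ℝ → ℝ}
    (hL : 0 < L) (hr : Cone L z r) (h1 : ∫ x in Ioo z (z+1), r x = 1) (hdec : DecP Ts z r σ)
    (hσ0 : 0 < σ) (hσ1 : σ < 1) {h G : ℝ → ℝ} {M Kf MG ΛG : ℝ} (hh : Continuous h)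
    (hper : ∀ x, h (x + 1) = h x) (hM : ∀ x, |h x| ≤ M) (hKf : 0 ≤ Kf)
    (hLip : ∀ x y, |h x - h y| ≤ Kf * |x - y|) (hGc : Continuous G)
    (hGM : ∀ x, |G x| ≤ MG) (hΛ : 0 ≤ ΛG) (m : ℕ)
    (hGL : ∀ x y, |G x - G y| ≤ ΛG * |liftIter Ts m x - liftIter Ts m y|)
    (e : ℕ → ℝ) (he : ∀ k, e k = wInt z r (fun x => h (liftIter Ts k x))) (i j : ℕ) :
    |wCov z r G (fun x => (h (liftIter Ts (m + i) x) - e (m + i)) *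
      (h (liftIter Ts (m + j) x) - e (m + j)))| ≤
      (2 * (2 * MG + ΛG) * (2 * M * (2 * M)) +
        (2 * (2 * (MG * (2 * M)) + (MG * Kf + 2 * M * ΛG)) * (2 * M) +
          MG * (2 * (2 * (2 * M) + Kf) * (2 * M)))) * σ ^ i * σ ^ j := by
  rcases le_total i j with hij | hij
  · exact cov_XX_aux hlam hA hL hr h1 hdec hσ0 hσ1 hh hper hM hKf hLip hGc hGM hΛ m hGL e he i j hij
  · have := cov_XX_aux hlam hA hL hr h1 hdec hσ0 hσ1 hh hper hM hKf hLip hGc hGM hΛ m hGL e he j i hij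
    rw [mul_right_comm]
    refine le_trans (le_of_eq ?_) this
    congr 2; ext x; ring

end

section
variable {lam Astar : ℝ}

lemma toMap_coe (T : CM lam Astar) (x : ℝ) : T.toMap (x : Circle1) = ((T.F x : ℝ) : Circle1) := by
  unfold CM.toMap
  rw [AddCircle.coe_equivIco_mk_apply]
  simp only [div_one, mul_one]
  have hper : Function.Periodic (fun y : ℝ => ((T.F y : ℝ) : Circle1)) 1 := by
    intro y
    show ((T.F (y + 1) : ℝ) : Circle1) = _
    rw [T.lift_add_one, AddCircle.coe_add]
    have : ((T.deg : ℝ) : Circle1) = 0 := by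
      rw [AddCircle.coe_eq_zero_iff]
      exact ⟨T.deg, by simp⟩
    rw [this, add_zero]
  have := hper.sub_int_mul_eq ⌊x⌋ (x := x)
  simp only [mul_one] at this
  exact this

lemma arrIter_coe (Tarr : ℕ → ℕ → CM lam Astar) (n k : ℕ) (x : ℝ) :
    arrIter Tarr n k (x : Circle1) = ((liftIter (Tarr n) k x : ℝ) : Circle1) := by
  induction k with
  | zero => rfl
  | succ k ih =>
    show (Tarr n (k+1)).toMap (arrIter Tarr n k (x : Circle1)) = _
    rw [ih, toMap_coe]; rfl

lemma circ_int (z : ℝ) (u : Circle1 → ℝ) : ∫ x : Circle1, u x = ∫ x in Ioo z (z + 1), u (x : Circle1) := by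
  rw [← AddCircle.integral_preimage 1 z u, integral_Ioc_eq_integral_Ioo]

lemma rho_cone {L : ℝ} {ρ : Circle1 → ℝ} (hL : 0 < L) (hρ : memD L ρ) :
    ∃ z : ℝ, Cone L z (fun x => ρ (x : Circle1)) ∧ ∫ x in Ioo z (z+1), ρ (x : Circle1) = 1 := by
  obtain ⟨⟨hint, h1, h0⟩, hpos, z, hz⟩ := hρ
  refine ⟨zrep z, ?_, by rw [← circ_int, h1]⟩
  have hzc : ((zrep z : ℝ) : Circle1) = z := AddCircle.coe_equivIco
  have hne : ∀ x ∈ Ioo (zrep z) (zrep z + 1), (x : Circle1) ≠ z := by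
    intro x hx h
    rw [← hzc, AddCircle.coe_eq_coe_iff_of_mem_Ico (a := zrep z) ⟨hx.1.le, hx.2⟩ ⟨le_rfl, by linarith⟩] at h
    exact hx.1.ne' h
  have hlog : ∀ x ∈ Ioo (zrep z) (zrep z + 1), ∀ y ∈ Ioo (zrep z) (zrep z + 1),
      |Real.log (ρ (x : Circle1)) - Real.log (ρ (y : Circle1))| ≤ L * |x - y| := by
    intro x hx y hy
    have := hz x y (hne x hx) (hne y hy)
    unfold arcDist arcCoord at this
    rwa [AddCircle.equivIoc_coe_of_mem ⟨hx.1, hx.2.le⟩, AddCircle.equivIoc_coe_of_mem ⟨hy.1, hy.2.le⟩] at this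
  refine ⟨?_, fun x _ => (hpos _).le, ?_⟩
  · have hl : LipschitzOnWith ⟨L, hL.le⟩ (fun x : ℝ => Real.log (ρ (x : Circle1))) (Ioo (zrep z) (zrep z + 1)) :=
      LipschitzOnWith.of_dist_le_mul fun x hx y hy => hlog x hx y hy
    have := hl.continuousOn.rexp
    refine this.congr fun x _ => ?_
    simp only [Real.exp_log (hpos _)]
  · intro x hx y hy
    have := (abs_le.1 (hlog x hx y hy)).2
    rw [← Real.exp_log (hpos (x : Circle1))]
    rw [← Real.exp_log (hpos (y : Circle1))]
    rw [← Real.exp_add]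
    apply Real.exp_le_exp.2
    linarith

noncomputable def cw (a : ℝ) (k : ℕ) : ℝ := max 0 (min 1 (a - k))

lemma cw_nonneg (a : ℝ) (k : ℕ) : 0 ≤ cw a k := le_max_left _ _
lemma cw_le (a : ℝ) (k : ℕ) : cw a k ≤ 1 := max_le zero_le_one (min_le_left _ _)

lemma cw_one {a : ℝ} (ha : 0 ≤ a) {k : ℕ} (h : k < ⌊a⌋₊) : cw a k = 1 := by
  have h1 : ((k + 1 : ℕ) : ℝ) ≤ ⌊a⌋₊ := by exact_mod_cast h
  have h2 := Nat.floor_le ha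
  push_cast at h1
  unfold cw
  rw [min_eq_left (by linarith)]; simp

lemma cw_sum {a : ℝ} (ha : 0 ≤ a) (y : ℕ → ℝ) {q : ℕ} (hq : ⌊a⌋₊ + 1 ≤ q) :
    (∑ k ∈ Finset.range ⌊a⌋₊, y k) + Int.fract a * y ⌊a⌋₊ = ∑ k ∈ Finset.range q, cw a k * y k := by
  obtain ⟨d, rfl⟩ := Nat.exists_eq_add_of_le hq
  rw [Finset.sum_range_add, Finset.sum_range_succ]
  have h2 := Nat.floor_le ha
  have h3 := Nat.lt_floor_add_one a
  have e1 : ∑ k ∈ Finset.range d, cw a (⌊a⌋₊ + 1 + k) * y (⌊a⌋₊ + 1 + k) = 0 := by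
    refine Finset.sum_eq_zero fun k _ => ?_
    have : cw a (⌊a⌋₊ + 1 + k) = 0 := by
      unfold cw
      apply max_eq_left
      refine (min_le_right _ _).trans ?_
      push_cast
      have : (0:ℝ) ≤ k := by positivity
      linarith
    rw [this, zero_mul]
  have e2 : cw a ⌊a⌋₊ = Int.fract a := by
    unfold cw
    rw [min_eq_right (by linarith), max_eq_right (by linarith), Int.fract, natCast_floor_eq_intCast_floor ha]
  rw [e1, e2, add_zero]
  congr 1
  refine Finset.sum_congr rfl fun k hk => ?_
  rw [cw_one ha (Finset.mem_range.1 hk), one_mul]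

lemma cw_mono {a b : ℝ} (h : a ≤ b) (k : ℕ) : cw a k ≤ cw b k := by
  unfold cw; gcongr

lemma zeta_eq (Tarr : ℕ → ℕ → CM lam Astar) (f : Circle1 → ℝ) (n : ℕ) (x t : ℝ) (ht : 0 ≤ t) {q : ℕ}
    (hq : ⌊(n : ℝ) * t⌋₊ + 1 ≤ q) :
    zetaP Tarr f n (x : Circle1) t = (n : ℝ)⁻¹ * ∑ k ∈ Finset.range q,
      cw (n * t) k * f ((liftIter (Tarr n) k x : ℝ) : Circle1) := by
  unfold zetaP
  rw [cw_sum (by positivity) (fun k => fnk Tarr f n k (x : Circle1)) hq]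
  simp only [fnk, arrIter_coe]

lemma zeta_diff (Tarr : ℕ → ℕ → CM lam Astar) (f : Circle1 → ℝ) (n : ℕ) (s t : ℝ) (hs : 0 ≤ s)
    (hst : s ≤ t) : ∃ (b : ℕ → ℝ) (q : ℕ), (∀ i, |b i| ≤ 1) ∧ ∀ x : ℝ,
    zetaP Tarr f n (x : Circle1) t - zetaP Tarr f n (x : Circle1) s = (n : ℝ)⁻¹ *
      ∑ i ∈ Finset.range q, b i * f ((liftIter (Tarr n) (⌊(n : ℝ) * s⌋₊ + i) x : ℝ) : Circle1) := by
  set m := ⌊(n : ℝ) * s⌋₊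
  have hns : (n : ℝ) * s ≤ n * t := by gcongr
  refine ⟨fun i => cw (n * t) (m + i) - cw (n * s) (m + i), ⌊(n : ℝ) * t⌋₊ + 1, ?_, ?_⟩
  · intro i
    have h1 := cw_mono hns (m + i)
    rw [abs_le]
    constructor <;> linarith [cw_nonneg (n * s) (m + i), cw_le (n * t) (m + i)]
  · intro x
    rw [zeta_eq Tarr f n x t (hs.trans hst) (q := m + (⌊(n : ℝ) * t⌋₊ + 1)) (by omega),
      zeta_eq Tarr f n x s hs (q := m + (⌊(n : ℝ) * t⌋₊ + 1)) (by
        have : m ≤ ⌊(n : ℝ) * t⌋₊ := Nat.floor_mono hns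
        omega), ← mul_sub, ← Finset.sum_sub_distrib, Finset.sum_range_add]
    rw [Finset.sum_eq_zero, zero_add]
    · congr 1
      refine Finset.sum_congr rfl fun i _ => ?_
      ring
    · intro k hk
      have hk := Finset.mem_range.1 hk
      rw [cw_one (by positivity) hk, cw_one (by have := hs.trans hst; positivity)
        (hk.trans_le (Nat.floor_mono hns)), sub_self]

lemma zeta_lip (hlam : 1 < lam) (Tarr : ℕ → ℕ → CM lam Astar) (f : Circle1 → ℝ) {Kf : ℝ} (hKf : 0 ≤ Kf)
    (hLip : ∀ x y : ℝ, |f (x : Circle1) - f (y : Circle1)| ≤ Kf * |x - y|)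
    (n : ℕ) (s : ℝ) (hs : 0 ≤ s) (x y : ℝ) :
    |zetaP Tarr f n (x : Circle1) s - zetaP Tarr f n (y : Circle1) s| ≤
      (n : ℝ)⁻¹ * (Kf * (1 - lam⁻¹)⁻¹) * |liftIter (Tarr n) ⌊(n : ℝ) * s⌋₊ x - liftIter (Tarr n) ⌊(n : ℝ) * s⌋₊ y| := by
  set m := ⌊(n : ℝ) * s⌋₊ with hm
  have hl0 : 0 < lam := by linarith
  have hli : lam⁻¹ < 1 := inv_lt_one_of_one_lt₀ hlam
  have hli0 : 0 ≤ lam⁻¹ := by positivity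
  rw [zeta_eq Tarr f n x s hs le_rfl, zeta_eq Tarr f n y s hs le_rfl, ← mul_sub, ← Finset.sum_sub_distrib,
    abs_mul, abs_of_nonneg (by positivity : 0 ≤ (n : ℝ)⁻¹), mul_assoc]
  refine mul_le_mul_of_nonneg_left ?_ (by positivity)
  set w := |liftIter (Tarr n) m x - liftIter (Tarr n) m y|
  rw [← hm]
  calc _ ≤ ∑ k ∈ Finset.range (m + 1), |cw (n * s) k * f ((liftIter (Tarr n) k x : ℝ) : Circle1) -
          cw (n * s) k * f ((liftIter (Tarr n) k y : ℝ) : Circle1)| := Finset.abs_sum_le_sum_abs _ _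
    _ ≤ ∑ k ∈ Finset.range (m + 1), Kf * w * lam⁻¹ ^ (m + 1 - 1 - k) := by
      refine Finset.sum_le_sum fun k hk => ?_
      have hk : k ≤ m := Nat.lt_succ_iff.1 (Finset.mem_range.1 hk)
      rw [← mul_sub, abs_mul, abs_of_nonneg (cw_nonneg _ _)]
      have h1 := hLip (liftIter (Tarr n) k x) (liftIter (Tarr n) k y)
      have h2 := lift_expand hlam (Tarr n) k (m - k) x y
      rw [Nat.add_sub_cancel' hk] at h2
      have h3 : |liftIter (Tarr n) k x - liftIter (Tarr n) k y| ≤ w * lam⁻¹ ^ (m - k) := by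
        rw [inv_pow, ← div_eq_mul_inv, le_div_iff₀ (by positivity), mul_comm]
        exact h2
      calc _ ≤ 1 * |f ((liftIter (Tarr n) k x : ℝ) : Circle1) - f ((liftIter (Tarr n) k y : ℝ) : Circle1)| := by
            gcongr; exact cw_le _ _
        _ ≤ Kf * (w * lam⁻¹ ^ (m - k)) := by
          rw [one_mul]; exact h1.trans (mul_le_mul_of_nonneg_left h3 hKf)
        _ = _ := by rw [Nat.add_sub_cancel]; ring
    _ = Kf * w * ∑ k ∈ Finset.range (m + 1), lam⁻¹ ^ k := by
      rw [← Finset.mul_sum, Finset.sum_range_reflect (fun k => lam⁻¹ ^ k)]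
    _ ≤ Kf * w * (1 - lam⁻¹)⁻¹ := by
      gcongr
      rw [← tsum_geometric_of_lt_one hli0 hli]
      exact (summable_geometric_of_lt_one hli0 hli).sum_le_tsum _ (fun i _ => by positivity)
    _ = _ := by ring

lemma zeta_bound (Tarr : ℕ → ℕ → CM lam Astar) (f : Circle1 → ℝ) {M : ℝ}
    (hM : ∀ x : ℝ, |f (x : Circle1)| ≤ M) (n : ℕ) (hn : 1 ≤ n) (s : ℝ) (hs : 0 ≤ s) (hs1 : s ≤ 1) (x : ℝ) :
    |zetaP Tarr f n (x : Circle1) s| ≤ 2 * M := by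
  have hM0 : 0 ≤ M := (abs_nonneg _).trans (hM 0)
  have hn' : (1:ℝ) ≤ n := by exact_mod_cast hn
  rw [zeta_eq Tarr f n x s hs (q := n + 1) (by
      have : ⌊(n : ℝ) * s⌋₊ ≤ n := by
        rw [← Nat.floor_natCast (R := ℝ) n]
        apply Nat.floor_mono
        rw [Nat.floor_natCast]
        nlinarith
      omega), abs_mul, abs_of_nonneg (by positivity : 0 ≤ (n : ℝ)⁻¹)]
  rw [inv_mul_le_iff₀ (by linarith)]
  calc _ ≤ ∑ k ∈ Finset.range (n + 1), |cw (n * s) k * f ((liftIter (Tarr n) k x : ℝ) : Circle1)| := 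
        Finset.abs_sum_le_sum_abs _ _
    _ ≤ ∑ k ∈ Finset.range (n + 1), 1 * M := by
      refine Finset.sum_le_sum fun k _ => ?_
      rw [abs_mul, abs_of_nonneg (cw_nonneg _ _)]
      exact mul_le_mul (cw_le _ _) (hM _) (abs_nonneg _) zero_le_one
    _ = (n + 1) * M := by simp
    _ ≤ _ := by nlinarith

lemma zeta_cont (Tarr : ℕ → ℕ → CM lam Astar) (f : Circle1 → ℝ) (hf : Continuous f)
    (n : ℕ) (s : ℝ) (hs : 0 ≤ s) : Continuous fun x : ℝ => zetaP Tarr f n (x : Circle1) s := by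
  simp_rw [fun x => zeta_eq Tarr f n x s hs le_rfl]
  refine continuous_const.mul (continuous_finsetSum _ fun k _ => continuous_const.mul ?_)
  exact hf.comp ((AddCircle.continuous_mk' 1).comp (lift_cont _ _))

lemma wInt_sum {L z : ℝ} {r : ℝ → ℝ} (hL : 0 < L) (hr : Cone L z r)
    {u : ℕ → ℝ → ℝ} (hu : ∀ i, BM (u i)) (b : ℕ → ℝ) (q : ℕ) :
    wInt z r (fun x => ∑ i ∈ Finset.range q, b i * u i x) =
      ∑ i ∈ Finset.range q, b i * wInt z r (u i) := by
  induction q with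
  | zero => simp [wInt]
  | succ q ih =>
    rw [Finset.sum_range_succ, ← ih]
    simp_rw [Finset.sum_range_succ]
    rw [wInt_add hL hr (BM.sum hu b q) ((BM.const _).mul (hu q)), wInt_smul]

lemma wCov_smul {z : ℝ} {r u v : ℝ → ℝ} (c : ℝ) :
    wCov z r u (fun x => c * v x) = c * wCov z r u v := by
  unfold wCov
  rw [wInt_smul, show (fun x => u x * (c * v x)) = fun x => c * (u x * v x) by ext x; ring, wInt_smul]
  ring

end
/-- Lemma `lem:dec_moments`.  Decorrelation at the process level: for an
initial density `ρ ∈ 𝒟_L` and `0 ≤ s ≤ t ≤ 1`,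
(i) for `A ∈ C^∞(ℝ)`, `μ[A(ζₙ(s))(ζₙ(t) − ζₙ(s))] − μ[A(ζₙ(s))]·μ[ζₙ(t) − ζₙ(s)] → 0`, and
(ii) for `A ∈ C_c^∞(ℝ)` and `q ∈ {1,2}`,
`μ[A(ξₙ(s))(ξₙ(t) − ξₙ(s))^q] − μ[A(ξₙ(s))]·μ[(ξₙ(t) − ξₙ(s))^q] → 0` as `n → ∞`. -/
theorem statement13 {lam Astar : ℝ} (hlam : 1 < lam) (hA : 0 < Astar)
    {η : ℝ} (hη : η ∈ Set.Ioo (0 : ℝ) 1)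
    (γ : ℝ → CM lam Astar) (hγ : HolderCurve η γ)
    (Tarr : ℕ → ℕ → CM lam Astar) (hT : ArrayApprox η γ Tarr)
    (f : Circle1 → ℝ) (hf : ∃ K : NNReal, LipschitzWith K f)
    (L : ℝ) (hL : 0 < L) (ρ : Circle1 → ℝ) (hρ : memD L ρ)
    (s t : ℝ) (hs : s ∈ Set.Icc (0 : ℝ) 1) (ht : t ∈ Set.Icc (0 : ℝ) 1) (hst : s ≤ t) :
    (∀ A : ℝ → ℝ, ContDiff ℝ (⊤ : ℕ∞) A →
      Tendsto (fun n : ℕ =>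
          (∫ x : Circle1, A (zetaP Tarr f n x s) * (zetaP Tarr f n x t - zetaP Tarr f n x s) * ρ x) -
          (∫ x : Circle1, A (zetaP Tarr f n x s) * ρ x) *
          (∫ x : Circle1, (zetaP Tarr f n x t - zetaP Tarr f n x s) * ρ x))
        atTop (𝓝 0)) ∧
    (∀ A : ℝ → ℝ, ContDiff ℝ (⊤ : ℕ∞) A → HasCompactSupport A → ∀ q : ℕ, q = 1 ∨ q = 2 →
      Tendsto (fun n : ℕ =>
          (∫ x : Circle1, A (xiD Tarr f ρ n x s) * (xiD Tarr f ρ n x t - xiD Tarr f ρ n x s) ^ q * ρ x) -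
          (∫ x : Circle1, A (xiD Tarr f ρ n x s) * ρ x) *
          (∫ x : Circle1, (xiD Tarr f ρ n x t - xiD Tarr f ρ n x s) ^ q * ρ x))
        atTop (𝓝 0)) := by
  obtain ⟨K, hK⟩ := hf
  have hfc : Continuous f := hK.continuous
  obtain ⟨σ, hσ0, hσ1, hdecor⟩ := decor hlam hA hL
  obtain ⟨z, hr, h1⟩ := rho_cone hL hρ
  obtain ⟨M, hM⟩ : ∃ M, ∀ x : Circle1, |f x| ≤ M := by
    obtain ⟨M, hM⟩ := isCompact_univ.exists_bound_of_continuousOn hfc.continuousOn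
    exact ⟨M, fun x => hM x trivial⟩
  have hM' : ∀ x : ℝ, |f (x : Circle1)| ≤ M := fun x => hM x
  have hM0 : 0 ≤ M := (abs_nonneg _).trans (hM 0)
  have hKf : (0:ℝ) ≤ (K : ℝ) := K.2
  have hLip : ∀ x y : ℝ, |f (x : Circle1) - f (y : Circle1)| ≤ (K : ℝ) * |x - y| := by
    intro x y
    have h := hK.dist_le_mul (x : Circle1) (y : Circle1)
    rw [Real.dist_eq] at h
    refine h.trans (mul_le_mul_of_nonneg_left ?_ hKf)
    rw [dist_eq_norm, ← AddCircle.coe_sub, UnitAddCircle.norm_eq]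
    simpa using round_le (x - y) 0
  set h : ℝ → ℝ := fun x => f (x : Circle1) with hh
  have hhc : Continuous h := hfc.comp (AddCircle.continuous_mk' 1)
  have hper : ∀ x, h (x + 1) = h x := by
    intro x
    simp only [hh, AddCircle.coe_add, AddCircle.coe_period, add_zero]
  set r : ℝ → ℝ := fun x => ρ (x : Circle1) with hrdef
  have hdec : ∀ n, DecP (Tarr n) z r σ := fun n => hdecor (Tarr n) z r hr h1
  set κ : ℝ := K * (1 - lam⁻¹)⁻¹ with hκ
  have hκ0 : 0 ≤ κ := by
    have : lam⁻¹ < 1 := inv_lt_one_of_one_lt₀ hlam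
    have : 0 ≤ (1 - lam⁻¹)⁻¹ := inv_nonneg.2 (by linarith)
    positivity
  have hBM : ∀ n k, BM (fun x => h (liftIter (Tarr n) k x)) := fun n k =>
    ⟨(hhc.comp (lift_cont _ k)).measurable, M, fun x => hM _⟩
  have hs0 := hs.1
  have hs1 := hs.2
  have ht0 := ht.1
  have ht1 := ht.2
  have hsig : 0 < 1 - σ := by linarith
  have hinv : Tendsto (fun n : ℕ => (n : ℝ)⁻¹) atTop (𝓝 0) := tendsto_inv_atTop_nhds_zero_nat
  constructor
  · intro A hAs
    have hAc : Continuous A := hAs.continuous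
    have hAd : Differentiable ℝ A := hAs.differentiable (by simp)
    obtain ⟨MA, hMA⟩ := (isCompact_Icc (a := -(2*M)) (b := 2*M)).exists_bound_of_continuousOn hAc.continuousOn
    obtain ⟨ΛA, hΛA⟩ := (isCompact_Icc (a := -(2*M)) (b := 2*M)).exists_bound_of_continuousOn
      (hAs.continuous_deriv (by simp)).continuousOn
    have hΛA0 : 0 ≤ ΛA := (norm_nonneg _).trans (hΛA 0 ⟨by linarith, by linarith⟩)
    have hAL : ∀ a ∈ Icc (-(2*M)) (2*M), ∀ b ∈ Icc (-(2*M)) (2*M), |A a - A b| ≤ ΛA * |a - b| := by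
      intro a ha b hb
      exact (convex_Icc _ _).norm_image_sub_le_of_norm_deriv_le (fun x _ => hAd x) hΛA hb ha
    set C := 2 * (2 * MA + ΛA * κ) * M
    have hlim : Tendsto (fun n : ℕ => (n : ℝ)⁻¹ * (C / (1 - σ))) atTop (𝓝 0) := by
      simpa using hinv.mul_const (C / (1 - σ))
    refine squeeze_zero_norm' ?_ hlim
    filter_upwards [eventually_ge_atTop 1] with n hn
    have hn' : (1:ℝ) ≤ n := by exact_mod_cast hn
    have hzb : ∀ x : ℝ, zetaP Tarr f n (x : Circle1) s ∈ Icc (-(2*M)) (2*M) := fun x =>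
      abs_le.1 (zeta_bound Tarr f hM' n hn s hs0 hs1 x)
    obtain ⟨b, q, hb, hd⟩ := zeta_diff Tarr f n s t hs0 hst
    set G : ℝ → ℝ := fun x => A (zetaP Tarr f n (x : Circle1) s) with hG
    have hGc : Continuous G := hAc.comp (zeta_cont Tarr f hfc n s hs0)
    have hGM : ∀ x, |G x| ≤ MA := fun x => hMA _ (hzb x)
    have hGL : ∀ x y, |G x - G y| ≤ (ΛA * κ) *
        |liftIter (Tarr n) ⌊(n : ℝ) * s⌋₊ x - liftIter (Tarr n) ⌊(n : ℝ) * s⌋₊ y| := by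
      intro x y
      refine (hAL _ (hzb x) _ (hzb y)).trans ?_
      rw [mul_assoc]
      refine mul_le_mul_of_nonneg_left ((zeta_lip hlam Tarr f hKf hLip n s hs0 x y).trans ?_) hΛA0
      refine mul_le_mul_of_nonneg_right ?_ (abs_nonneg _)
      exact mul_le_of_le_one_left hκ0 (inv_le_one_of_one_le₀ hn')
    have hcov := covsum1 hL hr (G := G) ⟨hGc.measurable, MA, hGM⟩ (fun i => hBM n (⌊(n : ℝ) * s⌋₊ + i)) hb q
      hσ0 hσ1 (fun i => cov_Y (hdec n) hσ0 hσ1 hhc hper hM' hGc hGM (by positivity) _ hGL i)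
    rw [circ_int z, circ_int z, circ_int z]
    have e : (∫ x in Ioo z (z+1), A (zetaP Tarr f n (x : Circle1) s) *
        (zetaP Tarr f n (x : Circle1) t - zetaP Tarr f n (x : Circle1) s) * ρ x) -
        (∫ x in Ioo z (z+1), A (zetaP Tarr f n (x : Circle1) s) * ρ x) *
        (∫ x in Ioo z (z+1), (zetaP Tarr f n (x : Circle1) t - zetaP Tarr f n (x : Circle1) s) * ρ x) =
        wCov z r G (fun x => (n:ℝ)⁻¹ * ∑ i ∈ Finset.range q, b i * h (liftIter (Tarr n) (⌊(n : ℝ) * s⌋₊ + i) x)) := by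
      simp only [hd]
      rfl
    rw [e, wCov_smul, Real.norm_eq_abs, abs_mul, abs_of_nonneg (by positivity : (0:ℝ) ≤ (n:ℝ)⁻¹)]
    exact mul_le_mul_of_nonneg_left hcov (by positivity)
  · intro A hAs hAcs q hq
    have hAc : Continuous A := hAs.continuous
    obtain ⟨MA, hMA⟩ := hAcs.exists_bound_of_continuous hAc
    obtain ⟨ΛA', hΛA⟩ := hAs.lipschitzWith_of_hasCompactSupport hAcs (by simp)
    set ΛA : ℝ := (ΛA' : ℝ) with hΛAd
    have hΛA0 : 0 ≤ ΛA := ΛA'.2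
    have hAL : ∀ a b : ℝ, |A a - A b| ≤ ΛA * |a - b| := fun a b => hΛA.dist_le_mul a b
    have hMA0 : 0 ≤ MA := (norm_nonneg _).trans (hMA 0)
    set C1 := 2 * (2 * MA + ΛA * κ) * (2 * M)
    set C2 := (2 * (2 * MA + ΛA * κ) * (2 * M * (2 * M)) +
        (2 * (2 * (MA * (2 * M)) + (MA * K + 2 * M * (ΛA * κ))) * (2 * M) +
          MA * (2 * (2 * (2 * M) + K) * (2 * M))))
    have hβ : Tendsto (fun n : ℕ => Real.sqrt n * (n : ℝ)⁻¹) atTop (𝓝 0) := by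
      have : (fun n : ℕ => Real.sqrt n * (n : ℝ)⁻¹) = fun n : ℕ => Real.sqrt ((n : ℝ)⁻¹) := by
        ext n
        rw [Real.sqrt_inv, ← div_eq_mul_inv, Real.sqrt_div_self]
      rw [this]
      simpa [Function.comp_def] using (Real.continuous_sqrt.tendsto 0).comp hinv
    have key : ∀ n : ℕ, 1 ≤ n → ∃ (G : ℝ → ℝ) (b : ℕ → ℝ) (q' : ℕ) (e : ℕ → ℝ),
        Continuous G ∧ (∀ x, |G x| ≤ MA) ∧ (∀ x y, |G x - G y| ≤ (ΛA * κ) *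
        |liftIter (Tarr n) ⌊(n : ℝ) * s⌋₊ x - liftIter (Tarr n) ⌊(n : ℝ) * s⌋₊ y|) ∧
        (∀ i, |b i| ≤ 1) ∧ (∀ k, e k = wInt z r (fun x => h (liftIter (Tarr n) k x))) ∧
        (∫ x : Circle1, A (xiD Tarr f ρ n x s) * (xiD Tarr f ρ n x t - xiD Tarr f ρ n x s) ^ q * ρ x) -
          (∫ x : Circle1, A (xiD Tarr f ρ n x s) * ρ x) *
          (∫ x : Circle1, (xiD Tarr f ρ n x t - xiD Tarr f ρ n x s) ^ q * ρ x) =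
        (Real.sqrt n * (n : ℝ)⁻¹) ^ q * wCov z r G (fun x => (∑ i ∈ Finset.range q', b i *
          (h (liftIter (Tarr n) (⌊(n : ℝ) * s⌋₊ + i) x) - e (⌊(n : ℝ) * s⌋₊ + i))) ^ q) := by
      intro n hn
      have hn' : (1:ℝ) ≤ n := by exact_mod_cast hn
      obtain ⟨b, q', hb, hd⟩ := zeta_diff Tarr f n s t hs0 hst
      refine ⟨fun x => A (xiD Tarr f ρ n (x : Circle1) s), b, q',
        fun k => wInt z r (fun x => h (liftIter (Tarr n) k x)), ?_, fun x => hMA _, ?_, hb, fun _ => rfl, ?_⟩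
      · exact hAc.comp ((continuous_const.mul (zeta_cont Tarr f hfc n s hs0)).sub continuous_const)
      · intro x y
        refine (hAL _ _).trans ?_
        rw [mul_assoc]
        refine mul_le_mul_of_nonneg_left ?_ hΛA0
        unfold xiD
        rw [sub_sub_sub_cancel_right, ← mul_sub, abs_mul, abs_of_nonneg (Real.sqrt_nonneg _)]
        refine (mul_le_mul_of_nonneg_left (zeta_lip hlam Tarr f hKf hLip n s hs0 x y) (Real.sqrt_nonneg _)).trans ?_
        rw [← mul_assoc, ← mul_assoc]
        refine mul_le_mul_of_nonneg_right ?_ (abs_nonneg _)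
        refine mul_le_of_le_one_left hκ0 ?_
        rw [← div_eq_mul_inv, div_le_one (by linarith)]
        exact Real.sqrt_le_iff.2 ⟨by linarith, by nlinarith⟩
      · have hzB : ∀ u : ℝ, 0 ≤ u → u ≤ 1 → BM (fun x : ℝ => zetaP Tarr f n (x : Circle1) u) := fun u hu hu1 =>
          ⟨(zeta_cont Tarr f hfc n u hu).measurable, 2 * M, zeta_bound Tarr f hM' n hn u hu hu1⟩
        have hmean : ∀ u, zetaMean Tarr f ρ n u = wInt z r (fun x => zetaP Tarr f n (x : Circle1) u) := by
          intro u
          unfold zetaMean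
          rw [circ_int z]; rfl
        have hmd : zetaMean Tarr f ρ n t - zetaMean Tarr f ρ n s = (n:ℝ)⁻¹ * ∑ i ∈ Finset.range q', b i *
            wInt z r (fun x => h (liftIter (Tarr n) (⌊(n : ℝ) * s⌋₊ + i) x)) := by
          rw [← wInt_sum hL hr (fun i => hBM n (⌊(n : ℝ) * s⌋₊ + i)), ← wInt_smul, hmean, hmean]
          have : (fun x : ℝ => zetaP Tarr f n (x : Circle1) t) = fun x : ℝ =>
              (n:ℝ)⁻¹ * ∑ i ∈ Finset.range q', b i * h (liftIter (Tarr n) (⌊(n : ℝ) * s⌋₊ + i) x) +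
              zetaP Tarr f n (x : Circle1) s := by
            ext x
            rw [← hd x]; ring
          rw [this, wInt_add hL hr ((BM.const _).mul (BM.sum (fun i => hBM n (⌊(n : ℝ) * s⌋₊ + i)) b q'))
            (hzB s hs0 hs1)]
          ring
        have hxd : ∀ x : ℝ, xiD Tarr f ρ n (x : Circle1) t - xiD Tarr f ρ n (x : Circle1) s =
            (Real.sqrt n * (n : ℝ)⁻¹) * ∑ i ∈ Finset.range q', b i *
          (h (liftIter (Tarr n) (⌊(n : ℝ) * s⌋₊ + i) x) -
            wInt z r (fun x => h (liftIter (Tarr n) (⌊(n : ℝ) * s⌋₊ + i) x))) := by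
          intro x
          have hdx := hd x
          simp_rw [mul_sub]
          rw [Finset.sum_sub_distrib, mul_sub, mul_assoc, mul_assoc, ← hmd, ← hdx]
          unfold xiD
          ring
        rw [circ_int z, circ_int z, circ_int z, ← wCov_smul]
        simp only [hxd, mul_pow]
        rfl
    have hXB : ∀ n (e : ℕ → ℝ) m, ∀ i, BM (fun x => h (liftIter (Tarr n) (m + i) x) - e (m + i)) := by
      intro n e m i
      have := (hBM n (m + i)).add (BM.const (-e (m + i)))
      simpa only [sub_eq_add_neg] using this
    have fin : ∃ C, ∀ n : ℕ, 1 ≤ n → ‖(∫ x : Circle1, A (xiD Tarr f ρ n x s) * (xiD Tarr f ρ n x t - xiD Tarr f ρ n x s) ^ q * ρ x) -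
          (∫ x : Circle1, A (xiD Tarr f ρ n x s) * ρ x) *
          (∫ x : Circle1, (xiD Tarr f ρ n x t - xiD Tarr f ρ n x s) ^ q * ρ x)‖ ≤
          (Real.sqrt n * (n : ℝ)⁻¹) ^ q * C := by
      rcases hq with rfl | rfl
      · refine ⟨C1 / (1 - σ), fun n hn => ?_⟩
        obtain ⟨G, b, q', e, hGc, hGM, hGL, hb, he, heq⟩ := key n hn
        rw [heq, Real.norm_eq_abs, abs_mul, abs_of_nonneg (by positivity)]
        refine mul_le_mul_of_nonneg_left ?_ (by positivity)
        simp only [pow_one]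
        refine covsum1 hL hr ⟨hGc.measurable, MA, hGM⟩ (hXB n e _) hb q' hσ0 hσ1 fun i => ?_
        refine cov_Y (h := fun y => h y - e (⌊(n : ℝ) * s⌋₊ + i)) (hdec n) hσ0 hσ1 (hhc.sub continuous_const)
          (fun x => by simp only [hper]) (fun x => ?_) hGc hGM (by positivity) _ hGL i
        have h2 : |e (⌊(n : ℝ) * s⌋₊ + i)| ≤ M := by
          rw [he]; exact wInt_bound hL hr h1 (hBM n _).1 fun x => hM _
        have := abs_sub (h x) (e (⌊(n : ℝ) * s⌋₊ + i))
        linarith [hM' x]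
      · refine ⟨C2 / (1 - σ) / (1 - σ), fun n hn => ?_⟩
        obtain ⟨G, b, q', e, hGc, hGM, hGL, hb, he, heq⟩ := key n hn
        rw [heq, Real.norm_eq_abs, abs_mul, abs_of_nonneg (by positivity)]
        refine mul_le_mul_of_nonneg_left ?_ (by positivity)
        refine covsum2 hL hr ⟨hGc.measurable, MA, hGM⟩ (hXB n e _) hb q' hσ0 hσ1 fun i j => ?_
        exact cov_XX hlam hA hL hr h1 (hdec n) hσ0 hσ1 hhc hper hM' hKf hLip hGc hGM (by positivity) _ hGL e he i j
    obtain ⟨C, hC⟩ := fin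
    have hlim : Tendsto (fun n : ℕ => (Real.sqrt n * (n : ℝ)⁻¹) ^ q * C) atTop (𝓝 0) := by
      have hq0 : q ≠ 0 := by omega
      simpa [hq0] using (hβ.pow q).mul_const C
    refine squeeze_zero_norm' ?_ hlim
    filter_upwards [eventually_ge_atTop 1] with n hn
    exact hC n hn
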